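/- Let Ω ⊂ ℝ² be a bounded Lipschitz domain, and let (u_ε)_ε ⊂ W^{1,1}(Ω;ℝ²) be a sequence that is uniformly bounded in W^{1,1}(Ω;ℝ²), satisfies det ∇u_ε = 1 a.e. in Ω for all ε, and ‖∂₁u_ε‖_{L^∞(Ω;ℝ²)} ≤ C for a constant C independent of ε. If u_ε → u in L¹(Ω;ℝ²) for some u ∈ BV(Ω;ℝ²), then det ∇u = 1 a.e. in Ω, where ∇u denotes the approximate differential of u. -/

import Mathlib

open MeasureTheory Set Filter Topology
open scoped ENNReal

noncomputable section

/-- We identify `ℝ²` with maps `Fin 2 → ℝ`; `x 0` is the `x₁` coordinate and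
`x 1` the `x₂` coordinate. -/
abbrev V2 := Fin 2 → ℝ

/-- `2 × 2` real matrices. -/
abbrev Mat2 := Matrix (Fin 2) (Fin 2) ℝ

/-- Proper rotations: `SO(2) = {R : R Rᵀ = 1, det R = 1}`. -/
def SO2 : Set Mat2 := {R | R * R.transpose = 1 ∧ R.det = 1}

def e1 : V2 := ![1, 0]
def e2 : V2 := ![0, 1]

/-- Euclidean norm on `ℝ²`. -/
def vnorm (v : V2) : ℝ := Real.sqrt (v 0 ^ 2 + v 1 ^ 2)

/-- Frobenius norm on `2 × 2` matrices. -/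
def mnorm (M : Mat2) : ℝ := Real.sqrt (∑ i, ∑ j, M i j ^ 2)

/-- Euclidean inner product on `ℝ²`. -/
def dot (v w : V2) : ℝ := ∑ i, v i * w i

/-- Tensor (outer) product `a ⊗ b = a bᵀ` of two vectors. -/
def outer (a b : V2) : Mat2 := Matrix.of fun i j => a i * b j

/-- Identification of `ℝ²` with the Euclidean space `EuclideanSpace ℝ (Fin 2)`. -/
def vToE (v : V2) : EuclideanSpace ℝ (Fin 2) := (EuclideanSpace.equiv (Fin 2) ℝ).symm v

/-- Identification of `2×2` matrices with `EuclideanSpace ℝ (Fin 2 × Fin 2)`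
(so that the induced norm is the Frobenius norm). -/
def mToE (M : Mat2) : EuclideanSpace ℝ (Fin 2 × Fin 2) :=
  (EuclideanSpace.equiv (Fin 2 × Fin 2) ℝ).symm fun p => M p.1 p.2

/-- A vector-valued function of one real variable has bounded variation on `s`
(with respect to the Euclidean norm). -/
def BVv (ψ : ℝ → V2) (s : Set ℝ) : Prop := BoundedVariationOn (fun t => vToE (ψ t)) s

/-- A matrix-valued function of one real variable has bounded variation on `s`
(with respect to the Frobenius norm). -/
def BVm (R : ℝ → Mat2) (s : Set ℝ) : Prop := BoundedVariationOn (fun t => mToE (R t)) s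

/-- Componentwise (a.e. pointwise) derivative of a vector-valued function of one variable.
For a one-dimensional `BV` function, the classical derivative exists a.e. and coincides with
the density of the absolutely continuous part of its distributional derivative
(the approximate derivative). -/
def vecDeriv (ψ : ℝ → V2) (t : ℝ) : V2 := fun i => deriv (fun s => ψ s i) t

/-- Componentwise derivative of a matrix-valued function of one variable. -/
def mDeriv (R : ℝ → Mat2) (t : ℝ) : Mat2 := Matrix.of fun i j => deriv (fun s => R s i j) t

/-- The rigid layers `ε Y_rig = {x : Int.fract (x₂/ε) ∈ [λ, 1)}` (1-periodic extension of
`[0,1) × [λ,1)`, scaled by `ε`). -/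
def rigid2 (lam ε : ℝ) : Set V2 := {x | lam ≤ Int.fract (x 1 / ε)}

/-- The one-dimensional rigid layers `ε I_rig`, where `I_rig` is the 1-periodic extension
of `[λ, 1)`. -/
def rigid1 (lam ε : ℝ) : Set ℝ := {t | lam ≤ Int.fract (t / ε)}

/-- `a_Ω = inf_{x ∈ Ω} x₂`. -/
def aOm (Ω : Set V2) : ℝ := sInf ((fun x : V2 => x 1) '' Ω)

/-- `b_Ω = sup_{x ∈ Ω} x₂`. -/
def bOm (Ω : Set V2) : ℝ := sSup ((fun x : V2 => x 1) '' Ω)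

/-- `Ω` is `x₁`-connected: every horizontal slice is a (possibly empty) interval. -/
def X1Connected (Ω : Set V2) : Prop := ∀ t : ℝ, OrdConnected {s : ℝ | ![s, t] ∈ Ω}

/-- A (nonempty) bounded Lipschitz domain: near every boundary point, after a rotation,
`Ω` is the region above the graph of a Lipschitz function. -/
def IsLipschitzDomain (Ω : Set V2) : Prop :=
  IsOpen Ω ∧ Ω.Nonempty ∧ Bornology.IsBounded Ω ∧
    ∀ x ∈ frontier Ω, ∃ Q ∈ SO2, ∃ L : NNReal, ∃ f : ℝ → ℝ, ∃ r : ℝ, 0 < r ∧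
      LipschitzWith L f ∧ ∀ y ∈ Metric.ball x r, (y ∈ Ω ↔ f (Q.mulVec y 0) < Q.mulVec y 1)

/-- Partial derivative `∂_j φ` of a scalar test function. -/
def pd (j : Fin 2) (φ : V2 → ℝ) (x : V2) : ℝ := fderiv ℝ φ x (Pi.single j 1)

/-- Componentwise integrability of a matrix-valued map. -/
def IntegrableOnM (g : V2 → Mat2) (Ω : Set V2) : Prop :=
  ∀ i j, IntegrableOn (fun x => g x i j) Ω volume

/-- `u ∈ W^{1,1}(Ω;ℝ²)` with weak gradient `gu`, expressed through integration by parts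
against smooth compactly supported test functions. -/
structure IsSobolev11On (Ω : Set V2) (u : V2 → V2) (gu : V2 → Mat2) : Prop where
  int_u : IntegrableOn u Ω volume
  int_gu : IntegrableOnM gu Ω
  ibp : ∀ φ : V2 → ℝ, ContDiff ℝ (⊤ : ℕ∞) φ → HasCompactSupport φ → tsupport φ ⊆ Ω →
    ∀ i j, ∫ x in Ω, u x i * pd j φ x = - ∫ x in Ω, φ x * gu x i j

/-- `u ∈ BV(Ω;ℝ²)`, with distributional derivative `Du = gu · L² + gs · σ`.
Here `gu` is the approximate differential (density of the absolutely continuous part),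
`σ = |D^s u|` is the total variation measure of the singular part (a finite measure,
concentrated on `Ω` and singular with respect to Lebesgue measure), and `gs` is the
polar density of the singular part, of unit Frobenius norm `σ`-a.e. -/
structure HasBVDerivOn (Ω : Set V2) (u : V2 → V2) (gu : V2 → Mat2)
    (σ : Measure V2) (gs : V2 → Mat2) : Prop where
  int_u : IntegrableOn u Ω volume
  int_gu : IntegrableOnM gu Ω
  fin : σ Set.univ ≠ ⊤
  conc : σ Ωᶜ = 0
  perp : σ ⟂ₘ (volume : Measure V2)
  meas_gs : ∀ i j, AEMeasurable (fun x => gs x i j) σ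
  unit : ∀ᵐ x ∂σ, mnorm (gs x) = 1
  ibp : ∀ φ : V2 → ℝ, ContDiff ℝ (⊤ : ℕ∞) φ → HasCompactSupport φ → tsupport φ ⊆ Ω →
    ∀ i j, ∫ x in Ω, u x i * pd j φ x
        = (- ∫ x in Ω, φ x * gu x i j) - ∫ x, φ x * gs x i j ∂σ

/-- `L¹(Ω;ℝ²)` convergence of a sequence. -/
def L1ConvOn (Ω : Set V2) (un : ℕ → V2 → V2) (u : V2 → V2) : Prop :=
  Tendsto (fun n => ∫ x in Ω, vnorm (un n x - u x)) atTop (𝓝 0)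

/-- Weak* convergence of the measures `gn n · L²∟Ω` to `gu · L²∟Ω + gs · σ`
in `M(Ω; ℝ^{2×2})`, tested against continuous functions compactly supported in `Ω`. -/
def MeasConv (Ω : Set V2) (gn : ℕ → V2 → Mat2) (gu : V2 → Mat2)
    (σ : Measure V2) (gs : V2 → Mat2) : Prop :=
  ∀ φ : V2 → ℝ, Continuous φ → HasCompactSupport φ → tsupport φ ⊆ Ω → ∀ i j,
    Tendsto (fun n => ∫ x in Ω, φ x * gn n x i j) atTop
      (𝓝 ((∫ x in Ω, φ x * gu x i j) + ∫ x, φ x * gs x i j ∂σ))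

/-- Weak* convergence in `BV(Ω;ℝ²)` of a sequence of `W^{1,1}` maps to a `BV` limit:
`L¹` convergence together with weak* convergence of the derivative measures. -/
def WeakStarToBV (Ω : Set V2) (un : ℕ → V2 → V2) (u : V2 → V2) : Prop :=
  ∃ gu σ gs, HasBVDerivOn Ω u gu σ gs ∧ L1ConvOn Ω un u ∧
    ∀ gn : ℕ → V2 → Mat2, (∀ n, IsSobolev11On Ω (un n) (gn n)) → MeasConv Ω gn gu σ gs

/-- `u ∈ A_ε`, witnessed by the data `R ∈ L^∞(Ω;SO(2))` and `γ ∈ L¹(Ω)`: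
`u ∈ W^{1,1}(Ω;ℝ²)` with `∇u = R (I + γ e₁⊗e₂)` a.e. and `γ = 0` a.e. on `εY_rig ∩ Ω`. -/
structure MemAeps (Ω : Set V2) (lam ε : ℝ) (u : V2 → V2)
    (R : V2 → Mat2) (γ : V2 → ℝ) : Prop where
  so2 : ∀ᵐ x ∂(volume.restrict Ω), R x ∈ SO2
  int_γ : IntegrableOn γ Ω volume
  sob : IsSobolev11On Ω u fun x => R x * (1 + γ x • outer e1 e2)
  rig : ∀ᵐ x ∂(volume.restrict (Ω ∩ rigid2 lam ε)), γ x = 0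

/-- The elastoplastic energy `E_ε(u) = ∫_Ω |γ| dx` for `u ∈ A_ε`, `∞` otherwise,
as an `ℝ≥0∞`-valued functional (the decomposition data is essentially unique). -/
def Eeps (Ω : Set V2) (lam ε : ℝ) (u : V2 → V2) : ℝ≥0∞ :=
  sInf {c | ∃ R γ, MemAeps Ω lam ε u R γ ∧ c = ∫⁻ x in Ω, ENNReal.ofReal |γ x|}

/-- `u ∈ A` relative to the vertical interval `(a, b)`:
`u ∈ BV(Ω;ℝ²)` with `u(x) = R(x₂)x + ψ(x₂)` a.e., `R ∈ BV(a,b;SO(2))`,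
`ψ ∈ BV(a,b;ℝ²)` and `det ∇u = 1` a.e. in `Ω`. -/
def memAOn (Ω : Set V2) (a b : ℝ) (u : V2 → V2) : Prop :=
  ∃ gu σ gs, HasBVDerivOn Ω u gu σ gs ∧
    (∃ R : ℝ → Mat2, ∃ ψ : ℝ → V2, (∀ t ∈ Ioo a b, R t ∈ SO2) ∧
      BVm R (Ioo a b) ∧ BVv ψ (Ioo a b) ∧
      ∀ᵐ x ∂(volume.restrict Ω), u x = (R (x 1)).mulVec x + ψ (x 1)) ∧
    ∀ᵐ x ∂(volume.restrict Ω), (gu x).det = 1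

/-- `u ∈ A`. -/
def memA (Ω : Set V2) (u : V2 → V2) : Prop := memAOn Ω (aOm Ω) (bOm Ω) u

/-- `u ∈ A∥` relative to the vertical interval `(a,b)`:
`u(x) = Rx + ϑ(x₂) R e₁ + c` a.e. with a constant rotation `R ∈ SO(2)`,
`ϑ ∈ BV(a,b)` and `c ∈ ℝ²`. -/
def memAparOn (Ω : Set V2) (a b : ℝ) (u : V2 → V2) : Prop :=
  ∃ R ∈ SO2, ∃ ϑ : ℝ → ℝ, ∃ c : V2, BoundedVariationOn ϑ (Ioo a b) ∧
    ∀ᵐ x ∂(volume.restrict Ω), u x = R.mulVec x + ϑ (x 1) • R.mulVec e1 + c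

/-- `u ∈ A∥`. -/
def memApar (Ω : Set V2) (u : V2 → V2) : Prop := memAparOn Ω (aOm Ω) (bOm Ω) u

/-- The limit energy `E(u) = ∫_Ω |ψ'·Re₁| dx + |D^s u|(Ω)` for `u ∈ A`, `∞` otherwise. -/
def Efun (Ω : Set V2) (u : V2 → V2) : ℝ≥0∞ :=
  sInf {c | ∃ gu σ gs, HasBVDerivOn Ω u gu σ gs ∧
    ∃ R : ℝ → Mat2, ∃ ψ : ℝ → V2,
      (∀ t ∈ Ioo (aOm Ω) (bOm Ω), R t ∈ SO2) ∧ BVm R (Ioo (aOm Ω) (bOm Ω)) ∧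
      BVv ψ (Ioo (aOm Ω) (bOm Ω)) ∧
      (∀ᵐ x ∂(volume.restrict Ω), u x = (R (x 1)).mulVec x + ψ (x 1)) ∧
      (∀ᵐ x ∂(volume.restrict Ω), (gu x).det = 1) ∧
      c = (∫⁻ x in Ω, ENNReal.ofReal |dot (vecDeriv ψ (x 1)) ((R (x 1)).mulVec e1)|)
          + σ Set.univ}

/-- The limit energy on `A∥`: `E(u) = ∫_Ω |ϑ'(x₂)| dx + |D^s u|(Ω)` for `u ∈ A∥`,
`∞` otherwise. -/
def EparFun (Ω : Set V2) (u : V2 → V2) : ℝ≥0∞ :=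
  sInf {c | ∃ gu σ gs, HasBVDerivOn Ω u gu σ gs ∧
    ∃ R ∈ SO2, ∃ ϑ : ℝ → ℝ, ∃ c0 : V2, BoundedVariationOn ϑ (Ioo (aOm Ω) (bOm Ω)) ∧
      (∀ᵐ x ∂(volume.restrict Ω), u x = R.mulVec x + ϑ (x 1) • R.mulVec e1 + c0) ∧
      c = (∫⁻ x in Ω, ENNReal.ofReal |deriv ϑ (x 1)|) + σ Set.univ}

/-- The regularized limit energy `E^δ(u) = ∫_Ω |ϑ'| dx + |D^s u|(Ω) + δ|Ω|` on `A∥`,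
`∞` otherwise. -/
def EDelta (Ω : Set V2) (δ : ℝ) (u : V2 → V2) : ℝ≥0∞ :=
  EparFun Ω u + ENNReal.ofReal δ * volume Ω

/-- `‖v‖_{W^{1,p}(Ω;ℝ²)}^p = ∫_Ω |v|^p + ∫_Ω |Dv|^p` for a map `v` with weak Jacobian `G`. -/
def Wp1 (p : ℝ) (Ω : Set V2) (v : V2 → V2) (G : V2 → Mat2) : ℝ≥0∞ :=
  (∫⁻ x in Ω, ENNReal.ofReal (vnorm (v x) ^ p)) + ∫⁻ x in Ω, ENNReal.ofReal (mnorm (G x) ^ p)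

/-- The regularized energy
`E^δ_ε(u) = ∫_Ω |γ| dx + δ ‖∂₁ u‖_{W^{1,p}(Ω;ℝ²)}^p` for `u ∈ A_ε` with
`∂₁u = R e₁ ∈ W^{1,p}(Ω;ℝ²)`, and `∞` otherwise. -/
def EepsDelta (Ω : Set V2) (lam ε δ p : ℝ) (u : V2 → V2) : ℝ≥0∞ :=
  sInf {c | ∃ R γ, MemAeps Ω lam ε u R γ ∧
    ∃ G : V2 → Mat2, IsSobolev11On Ω (fun x => (R x).mulVec e1) G ∧
      c = (∫⁻ x in Ω, ENNReal.ofReal |γ x|) +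
          ENNReal.ofReal δ * Wp1 p Ω (fun x => (R x).mulVec e1) G}

/-- `x` is an approximate jump point of `u`, with one-sided approximate limits `a ≠ b`
relative to a unit normal `ν`. -/
def JumpPt (u : V2 → V2) (x : V2) : Prop :=
  ∃ a b ν : V2, a ≠ b ∧ vnorm ν = 1 ∧
    Tendsto (fun r : ℝ =>
        (∫⁻ z in {z | z ∈ Metric.ball x r ∧ 0 < dot (z - x) ν},
            ENNReal.ofReal (vnorm (u z - a))) / volume (Metric.ball x r))
      (𝓝[>] 0) (𝓝 0) ∧
    Tendsto (fun r : ℝ =>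
        (∫⁻ z in {z | z ∈ Metric.ball x r ∧ dot (z - x) ν < 0},
            ENNReal.ofReal (vnorm (u z - b))) / volume (Metric.ball x r))
      (𝓝[>] 0) (𝓝 0)

/-- The jump set `J_u` of `u` in `Ω`. -/
def jumpSet (Ω : Set V2) (u : V2 → V2) : Set V2 := {x ∈ Ω | JumpPt u x}

/-- `u ∈ SBV_∞(Ω;ℝ²)`: `u ∈ BV` with singular part concentrated on the jump set
(no Cantor part), `∇u ∈ L^∞(Ω;ℝ^{2×2})` and `H¹(J_u) < ∞`. -/
def memSBVinf (Ω : Set V2) (u : V2 → V2) : Prop :=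
  ∃ gu σ gs, HasBVDerivOn Ω u gu σ gs ∧
    σ {x | ¬ JumpPt u x} = 0 ∧
    (∃ M : ℝ, ∀ᵐ x ∂(volume.restrict Ω), mnorm (gu x) ≤ M) ∧
    Measure.hausdorffMeasure (1 : ℝ) (jumpSet Ω u) ≠ ⊤

/-- Piecewise constant functions on `(a,b)` with finitely many jumps
(the class `PC(a,b)`). -/
def PCOn {α : Type*} (a b : ℝ) (f : ℝ → α) : Prop :=
  ∃ S : Finset ℝ, ∀ s₁ ∈ Ioo a b, ∀ s₂ ∈ Ioo a b, s₁ ≤ s₂ →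
    (∀ r ∈ S, r ∉ Icc s₁ s₂) → f s₁ = f s₂

/-- Piecewise Lipschitz functions on `(a,b)` with finitely many jump points:
the class `SBV_∞(a,b;ℝ²)` of one-dimensional special functions of bounded variation
with bounded derivative and finitely many jumps. -/
def PLipOn (a b : ℝ) (f : ℝ → V2) : Prop :=
  ∃ S : Finset ℝ, ∃ L : ℝ, 0 ≤ L ∧ ∀ s₁ ∈ Ioo a b, ∀ s₂ ∈ Ioo a b, s₁ ≤ s₂ →
    (∀ r ∈ S, r ∉ Icc s₁ s₂) → vnorm (f s₂ - f s₁) ≤ L * (s₂ - s₁)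

/-- The rectangle `Ω = (0,1) × (−1,1)`. -/
def Rect : Set V2 := {x | x 0 ∈ Ioo (0:ℝ) 1 ∧ x 1 ∈ Ioo (-1:ℝ) 1}

/-- `f ∈ W^{1,1}(a,b)`: `f` has an integrable weak derivative on `(a,b)`
(absolutely continuous representative). -/
def IsW11On (f : ℝ → ℝ) (a b : ℝ) : Prop :=
  ∃ g : ℝ → ℝ, IntegrableOn g (Ioo a b) volume ∧
    ∀ s ∈ Ioo a b, ∀ t ∈ Ioo a b, f t - f s = ∫ r in s..t, g r

/-! Blow up at a point `x₀` where `∇u` is approximately continuous with value `L`, where `|Dˢu|` has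
density zero and where a weak limit `μ` of the measures `|∇uₙ|` has finite density. Choose `n` so
late that `uₙ` is much closer to `u` in `L¹` than the scale `r` of the ball; on that ball `uₙ` is
then `L¹`-close to the affine map `L x + c` at the finer scale `ε r`.

The first component is moreover close to its affine approximation *uniformly*, up to `O(ε r)`:
`|∂₁uₙ| ≤ C` controls the oscillation in the direction `x₁`, and the mass bound inherited from `μ`
controls it along a.e. vertical line on average. Since `det ∇uₙ` is a null Lagrangian, testing
`det ∇uₙ = 1` with a cutoff and integrating by parts moves the derivative from the first component
`w` of `uₙ - (L x + c)` to the cutoff, at the cost of `‖w‖_∞ ∫ |∇uₙ²| / r = O(ε r²)`, where `uₙ²` is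
the second component of `uₙ`. What remains is linear in `∇uₙ²`, hence converges to `det L`. So
`|1 - det L| = O(ε)`. -/

section Mollification

open Metric

variable {E : Type*} [NormedAddCommGroup E]

/-- The smooth bump at `c` that is `1` on `closedBall c (r / 2)` and is supported in
`closedBall c r`. Keeping the ratio of the two radii fixed makes all these bumps rescalings of a
single one. -/
def halfBump (c : E) {r : ℝ} (hr : 0 < r) : ContDiffBump c :=
  ⟨r / 2, r, half_pos hr, half_lt_self hr⟩

/-- A sequence of bumps shrinking to the origin, i.e. an approximation of the identity. -/
def shrinkingBump (E : Type*) [NormedAddCommGroup E] (k : ℕ) : ContDiffBump (0 : E) :=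
  halfBump 0 (Nat.one_div_pos_of_nat (n := k))

lemma eventually_rOut_shrinkingBump_le {r : ℝ} (hr : 0 < r) :
    ∀ᶠ k in atTop, (shrinkingBump E k).rOut ≤ r :=
  tendsto_one_div_add_atTop_nhds_zero_nat.eventually_le_const hr

lemma exists_norm_fderiv_halfBump_le (E : Type*) [NormedAddCommGroup E] [NormedSpace ℝ E]
    [FiniteDimensional ℝ E] :
    ∃ K : ℝ, ∀ (c : E) {r : ℝ} (hr : 0 < r) (x : E), ‖fderiv ℝ (halfBump c hr) x‖ ≤ K / r := by
  set b := halfBump (0 : E) one_pos with hb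
  obtain ⟨K, hK⟩ := (b.contDiff.continuous_fderiv one_ne_zero).bounded_above_of_compact_support
    (b.hasCompactSupport.fderiv ℝ)
  refine ⟨K, fun c r hr x ↦ ?_⟩
  have hscale : (halfBump c hr : E → ℝ) = fun y ↦ b (r⁻¹ • (y - c)) := by
    ext y
    rw [ContDiffBump.apply, hb, ContDiffBump.apply]
    have hratio : r / (r / 2) = 1 / (1 / 2) := by field_simp
    have hrIn : (r / 2)⁻¹ = (1 / 2)⁻¹ * r⁻¹ := by rw [← mul_inv, one_div_mul_eq_div]
    simp only [halfBump, sub_zero, smul_smul, hratio, hrIn]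
  have hderiv : HasFDerivAt (halfBump c hr)
      ((fderiv ℝ b (r⁻¹ • (x - c))).comp (r⁻¹ • ContinuousLinearMap.id ℝ E)) x := by
    rw [hscale]
    exact (b.contDiff.differentiable one_ne_zero _).hasFDerivAt.comp x
      (((hasFDerivAt_id x).sub_const c).const_smul r⁻¹)
  rw [hderiv.fderiv, ContinuousLinearMap.comp_smul, ContinuousLinearMap.comp_id, norm_smul,
    Real.norm_of_nonneg (inv_pos.2 hr).le, div_eq_inv_mul]
  exact mul_le_mul_of_nonneg_left (hK _) (inv_pos.2 hr).le

variable [NormedSpace ℝ E] [FiniteDimensional ℝ E] [MeasureSpace E]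

/-- The mollification `ρ * (f σ)` of the measure with density `f` with respect to `σ`. Letting `σ`
vary covers functions on an open set `Ω` (`σ = volume.restrict Ω`) and singular measures alike. -/
def mollify (ρ : ContDiffBump (0 : E)) (σ : Measure E) (f : E → ℝ) (x : E) : ℝ :=
  ∫ y, ρ.normed volume (x - y) * f y ∂σ

variable {ρ : ContDiffBump (0 : E)} {σ τ : Measure E} {f g : E → ℝ} {C : ℝ}

lemma mollify_zero_measure (ρ : ContDiffBump (0 : E)) (f : E → ℝ) : mollify ρ 0 f = 0 :=
  funext fun _ ↦ integral_zero_measure _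

lemma normed_sub_eq_zero {x y : E} (h : ρ.rOut ≤ dist y x) : ρ.normed volume (x - y) = 0 := by
  rw [ρ.normed_def, ρ.zero_of_le_dist (by simpa [dist_eq_norm, norm_sub_rev] using h), zero_div]

lemma tsupport_normed_sub_subset (ρ : ContDiffBump (0 : E)) (x : E) :
    tsupport (fun y ↦ ρ.normed volume (x - y)) ⊆ closedBall x ρ.rOut :=
  closure_minimal (fun _ hy ↦ not_lt.1 fun h ↦ hy (normed_sub_eq_zero h.le)) isClosed_closedBall

variable [BorelSpace E] [(volume : Measure E).IsAddHaarMeasure]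

lemma contDiff_mollify (ρ : ContDiffBump (0 : E)) (hf : LocallyIntegrable f σ) :
    ContDiff ℝ (⊤ : ℕ∞) (mollify ρ σ f) := by
  have hconv : mollify ρ σ f =
      convolution f (ρ.normed volume) (ContinuousLinearMap.mul ℝ ℝ) σ := by
    ext x
    simp [mollify, convolution, mul_comm]
  rw [hconv]
  exact ρ.hasCompactSupport_normed.contDiff_convolution_right _ hf ρ.contDiff_normed

lemma fderiv_mollify_apply (ρ : ContDiffBump (0 : E)) (hf : Integrable f σ) (x v : E) :
    fderiv ℝ (mollify ρ σ f) x v = ∫ y, fderiv ℝ (ρ.normed volume) (x - y) v * f y ∂σ := by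
  have hcont : Continuous (fderiv ℝ (ρ.normed (volume : Measure E))) :=
    ρ.contDiff_normed.continuous_fderiv one_ne_zero
  obtain ⟨M, hM⟩ := hcont.bounded_above_of_compact_support
    ((ρ.hasCompactSupport_normed (μ := volume)).fderiv ℝ)
  obtain ⟨N, hN⟩ := (ρ.continuous_normed (μ := volume)).bounded_above_of_compact_support
    ρ.hasCompactSupport_normed
  have hmeas : ∀ z, AEStronglyMeasurable (fun y ↦ ρ.normed volume (z - y)) σ := fun z ↦
    (ρ.continuous_normed.comp (continuous_sub_left z)).aestronglyMeasurable
  have hmeas' : AEStronglyMeasurable (fun y ↦ f y • fderiv ℝ (ρ.normed volume) (x - y)) σ :=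
    hf.aestronglyMeasurable.smul (hcont.comp (continuous_sub_left x)).aestronglyMeasurable
  have hbound : ∀ y z, ‖f y • fderiv ℝ (ρ.normed volume) (z - y)‖ ≤ ‖f y‖ * M := fun y z ↦ by
    rw [norm_smul]
    exact mul_le_mul_of_nonneg_left (hM _) (norm_nonneg _)
  have hderiv : HasFDerivAt (mollify ρ σ f)
      (∫ y, f y • fderiv ℝ (ρ.normed volume) (x - y) ∂σ) x := by
    refine hasFDerivAt_integral_of_dominated_of_fderiv_le univ_mem
      (Eventually.of_forall fun z ↦ (hmeas z).mul hf.aestronglyMeasurable)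
      (hf.bdd_mul (hmeas x) (Eventually.of_forall fun y ↦ hN _)) hmeas'
      (Eventually.of_forall fun y z _ ↦ hbound y z) (hf.norm.mul_const M)
      (Eventually.of_forall fun y z _ ↦ ?_)
    exact ((ρ.contDiff_normed.differentiable one_ne_zero (z - y)).hasFDerivAt.comp z
      ((hasFDerivAt_id z).sub_const y)).mul_const (f y)
  rw [hderiv.fderiv, ContinuousLinearMap.integral_apply
    ((hf.norm.mul_const M).mono' hmeas' (Eventually.of_forall fun y ↦ hbound y x))]
  simp [mul_comm]

lemma integrable_normed_sub (ρ : ContDiffBump (0 : E)) (x : E) :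
    Integrable fun y ↦ ρ.normed volume (x - y) :=
  (integrable_comp_sub_left (fun z ↦ ρ.normed volume z) x).2 ρ.integrable_normed

lemma abs_mollify_le (ρ : ContDiffBump (0 : E)) (hσ : σ ≤ volume) (hC₀ : 0 ≤ C)
    (hC : ∀ᵐ y ∂σ, |f y| ≤ C) (x : E) : |mollify ρ σ f x| ≤ C := by
  have hint : Integrable (fun y ↦ ρ.normed volume (x - y) * C) :=
    (integrable_normed_sub ρ x).mul_const C
  calc |mollify ρ σ f x| ≤ ∫ y, ρ.normed volume (x - y) * C ∂σ := by
        rw [← Real.norm_eq_abs]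
        refine norm_integral_le_of_norm_le (hint.mono_measure hσ) ?_
        filter_upwards [hC] with y hy
        rw [norm_mul, Real.norm_of_nonneg (ρ.nonneg_normed _)]
        exact mul_le_mul_of_nonneg_left hy (ρ.nonneg_normed _)
    _ ≤ ∫ y, ρ.normed volume (x - y) * C := integral_mono_measure hσ
        (Eventually.of_forall fun y ↦ mul_nonneg (ρ.nonneg_normed _) hC₀) hint
    _ = C := by
        rw [integral_mul_const, integral_sub_left_eq_self (fun z ↦ ρ.normed volume z) volume x,
          ρ.integral_normed, one_mul]

lemma lintegral_normed_sub_le_indicator (ρ : ContDiffBump (0 : E)) (x y : E) (r : ℝ) :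
    ∫⁻ z in closedBall x r, ‖ρ.normed volume (z - y)‖ₑ ≤
      (closedBall x (r + ρ.rOut)).indicator 1 y := by
  by_cases hy : y ∈ closedBall x (r + ρ.rOut)
  · rw [indicator_of_mem hy]
    calc _ ≤ ∫⁻ z, ‖ρ.normed volume (z - y)‖ₑ := setLIntegral_le_lintegral _ _
      _ = ∫⁻ z, ‖ρ.normed volume z‖ₑ :=
        lintegral_sub_right_eq_self (fun z ↦ ‖ρ.normed volume z‖ₑ) y
      _ = 1 := by
        rw [← ofReal_integral_norm_eq_lintegral_enorm ρ.integrable_normed]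
        simp [Real.norm_of_nonneg (ρ.nonneg_normed _), ρ.integral_normed]
  · refine (setLIntegral_eq_zero measurableSet_closedBall fun z hz ↦ ?_).trans_le zero_le
    rw [mem_closedBall, not_le] at hy
    rw [Pi.zero_apply, enorm_eq_zero, normed_sub_eq_zero]
    linarith [dist_triangle y z x, mem_closedBall.1 hz]

lemma lintegral_enorm_mollify_le (ρ : ContDiffBump (0 : E)) [SFinite σ] (hf : AEMeasurable f σ)
    (x : E) (r : ℝ) :
    ∫⁻ z in closedBall x r, ‖mollify ρ σ f z‖ₑ ≤
      ∫⁻ y in closedBall x (r + ρ.rOut), ‖f y‖ₑ ∂σ := by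
  have hρ : Continuous fun q : E × E ↦ ρ.normed volume (q.1 - q.2) :=
    ρ.continuous_normed.comp continuous_sub
  calc ∫⁻ z in closedBall x r, ‖mollify ρ σ f z‖ₑ
      ≤ ∫⁻ z in closedBall x r, ∫⁻ y, ‖ρ.normed volume (z - y)‖ₑ * ‖f y‖ₑ ∂σ := by
        gcongr with z
        simpa only [mollify, enorm_mul] using enorm_integral_le_lintegral_enorm (μ := σ)
          fun y ↦ ρ.normed volume (z - y) * f y
    _ = ∫⁻ y, (∫⁻ z in closedBall x r, ‖ρ.normed volume (z - y)‖ₑ) * ‖f y‖ₑ ∂σ := by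
        rw [lintegral_lintegral_swap (hρ.measurable.enorm.aemeasurable.mul hf.comp_snd.enorm)]
        congr with y
        exact lintegral_mul_const _
          (hρ.comp (continuous_id.prodMk continuous_const)).measurable.enorm
    _ ≤ ∫⁻ y, (closedBall x (r + ρ.rOut)).indicator (fun y ↦ ‖f y‖ₑ) y ∂σ := by
        gcongr with y
        refine (mul_le_mul_left (lintegral_normed_sub_le_indicator ρ x y r) _).trans_eq ?_
        by_cases hy : y ∈ closedBall x (r + ρ.rOut) <;> simp [hy]
    _ = ∫⁻ y in closedBall x (r + ρ.rOut), ‖f y‖ₑ ∂σ :=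
        lintegral_indicator measurableSet_closedBall _

lemma integral_mul_mollify_comm (ρ : ContDiffBump (0 : E)) [SFinite σ] [SFinite τ]
    (hf : Integrable f σ) (hg : Integrable g τ) :
    ∫ x, f x * mollify ρ τ g x ∂σ = ∫ y, g y * mollify ρ σ f y ∂τ := by
  obtain ⟨M, hM⟩ := (ρ.continuous_normed (μ := volume)).bounded_above_of_compact_support
    ρ.hasCompactSupport_normed
  have hint : Integrable
      (fun q : E × E ↦ ρ.normed volume (q.1 - q.2) * (f q.1 * g q.2)) (σ.prod τ) :=
    (hf.mul_prod hg).bdd_mul (ρ.continuous_normed.comp continuous_sub).aestronglyMeasurable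
      (Eventually.of_forall fun _ ↦ hM _)
  calc ∫ x, f x * mollify ρ τ g x ∂σ
      = ∫ x, ∫ y, ρ.normed volume (x - y) * (f x * g y) ∂τ ∂σ := by
        simp only [mollify, ← integral_const_mul, mul_left_comm]
    _ = ∫ y, ∫ x, ρ.normed volume (x - y) * (f x * g y) ∂σ ∂τ := integral_integral_swap hint
    _ = ∫ y, g y * mollify ρ σ f y ∂τ := by
        simp only [mollify, ← integral_const_mul]
        congr with y
        congr with x
        rw [← neg_sub, ρ.normed_neg]
        ring

lemma ae_tendsto_mollify_shrinkingBump {s : Set E} (hs : MeasurableSet s)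
    (hf : IntegrableOn f s) : ∀ᵐ x ∂volume.restrict s,
      Tendsto (fun k ↦ mollify (shrinkingBump E k) (volume.restrict s) f x) atTop (𝓝 (f x)) := by
  have hconv := ContDiffBump.ae_convolution_tendsto_right_of_locallyIntegrable (K := 2)
    (φ := shrinkingBump E) tendsto_one_div_add_atTop_nhds_zero_nat
    (Eventually.of_forall fun k ↦ (mul_div_cancel₀ _ two_ne_zero).ge)
    (hf.integrable_indicator hs).locallyIntegrable
  filter_upwards [ae_restrict_of_ae hconv, ae_restrict_mem hs] with x hx hxs
  rw [indicator_of_mem hxs] at hx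
  refine hx.congr fun k ↦ ?_
  rw [convolution_eq_swap, mollify, ← integral_indicator hs]
  congr with y
  by_cases hy : y ∈ s <;> simp [hy]

lemma tendsto_integral_mul_mollify_of_bounded_right {s : Set E} (hs : MeasurableSet s)
    (hf : IntegrableOn f s) (hg : IntegrableOn g s)
    (hC : ∀ᵐ x ∂volume.restrict s, |g x| ≤ C) :
    Tendsto (fun k ↦ ∫ x in s, f x * mollify (shrinkingBump E k) (volume.restrict s) g x) atTop
      (𝓝 (∫ x in s, f x * g x)) := by
  refine tendsto_integral_of_dominated_convergence (fun x ↦ |f x| * |C|)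
    (fun k ↦ hf.aestronglyMeasurable.mul
      (contDiff_mollify _ hg.locallyIntegrable).continuous.aestronglyMeasurable)
    (hf.abs.mul_const _) (fun k ↦ Eventually.of_forall fun x ↦ ?_) ?_
  · rw [norm_mul]
    exact mul_le_mul_of_nonneg_left (abs_mollify_le _ Measure.restrict_le_self (abs_nonneg C)
      (hC.mono fun _ h ↦ h.trans (le_abs_self C)) x) (norm_nonneg _)
  · filter_upwards [ae_tendsto_mollify_shrinkingBump hs hg] with x hx
    exact hx.const_mul _

lemma tendsto_integral_mul_mollify_of_bounded_left {s : Set E} (hs : MeasurableSet s)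
    (hf : IntegrableOn f s) (hg : IntegrableOn g s)
    (hC : ∀ᵐ x ∂volume.restrict s, |f x| ≤ C) :
    Tendsto (fun k ↦ ∫ x in s, f x * mollify (shrinkingBump E k) (volume.restrict s) g x) atTop
      (𝓝 (∫ x in s, f x * g x)) := by
  simpa only [integral_mul_mollify_comm _ hf hg, mul_comm (f _) (g _)] using
    tendsto_integral_mul_mollify_of_bounded_right hs hg hf hC

end Mollification

section PartialDerivatives

variable {f g φ : V2 → ℝ} {x : V2}

lemma pd_eq_zero_of_notMem_tsupport (j : Fin 2) (hx : x ∉ tsupport φ) : pd j φ x = 0 := by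
  simp [pd, fderiv_of_notMem_tsupport ℝ hx]

lemma hasCompactSupport_pd (j : Fin 2) (hφ : HasCompactSupport φ) : HasCompactSupport (pd j φ) :=
  hφ.fderiv_apply ℝ (Pi.single j 1)

lemma continuous_pd (j : Fin 2) (hf : ContDiff ℝ 1 f) : Continuous (pd j f) :=
  (hf.continuous_fderiv one_ne_zero).clm_apply continuous_const

lemma contDiff_pd (j : Fin 2) (hf : ContDiff ℝ (⊤ : ℕ∞) f) : ContDiff ℝ (⊤ : ℕ∞) (pd j f) :=
  (hf.fderiv_right (m := (⊤ : ℕ∞)) (by exact_mod_cast le_top)).clm_apply contDiff_const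

lemma abs_pd_le_norm_fderiv (j : Fin 2) (f : V2 → ℝ) (x : V2) : |pd j f x| ≤ ‖fderiv ℝ f x‖ := by
  simpa [pd, Pi.norm_single] using (fderiv ℝ f x).le_opNorm (Pi.single j 1)

lemma pd_mul (j : Fin 2) (hf : DifferentiableAt ℝ f x) (hg : DifferentiableAt ℝ g x) :
    pd j (fun y ↦ f y * g y) x = f x * pd j g x + g x * pd j f x := by
  simp [pd, fderiv_fun_mul hf hg]

lemma pd_comm (i j : Fin 2) (hf : ContDiff ℝ 2 f) (x : V2) :
    pd i (pd j f) x = pd j (pd i f) x := by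
  have hdiff : DifferentiableAt ℝ (fderiv ℝ f) x :=
    (hf.fderiv_right (m := 1) one_add_one_eq_two.le).differentiable one_ne_zero x
  have hsnd (i j : Fin 2) :
      pd i (pd j f) x = fderiv ℝ (fderiv ℝ f) x (Pi.single i 1) (Pi.single j 1) := by
    change fderiv ℝ (fun y ↦ fderiv ℝ f y (Pi.single j 1)) x (Pi.single i 1) = _
    rw [fderiv_clm_apply hdiff (differentiableAt_const _)]
    simp
  rw [hsnd, hsnd]
  exact hf.contDiffAt.isSymmSndFDerivAt (by simp) _ _

lemma pd_const_add_dotProduct (j : Fin 2) (c : ℝ) (L x : V2) :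
    pd j (fun y ↦ c + L ⬝ᵥ y) x = L j := by
  have hderiv (i : Fin 2) : HasFDerivAt (fun y : V2 ↦ L i * y i)
      (L i • ContinuousLinearMap.proj (R := ℝ) (φ := fun _ : Fin 2 ↦ ℝ) i) x :=
    (ContinuousLinearMap.proj (R := ℝ) (φ := fun _ : Fin 2 ↦ ℝ) i).hasFDerivAt.const_mul (L i)
  have hsum := (HasFDerivAt.fun_sum fun i (_ : i ∈ Finset.univ) ↦ hderiv i).const_add c
  change fderiv ℝ (fun y ↦ c + ∑ i, L i * y i) x (Pi.single j 1) = L j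
  rw [hsum.fderiv]
  fin_cases j <;> simp

lemma hasDerivAt_comp_update (hf : ContDiff ℝ 1 f) (p : V2) (i : Fin 2) (t : ℝ) :
    HasDerivAt (fun s ↦ f (Function.update p i s)) (pd i f (Function.update p i t)) t :=
  (hf.differentiable one_ne_zero _).hasFDerivAt.comp_hasDerivAt t (hasDerivAt_update p i t)

lemma integral_mul_pd_eq_neg (j : Fin 2) (hf : ContDiff ℝ 1 f) (hφ : ContDiff ℝ 1 φ)
    (hc : HasCompactSupport φ) : ∫ x, f x * pd j φ x = -∫ x, φ x * pd j f x := by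
  simp only [mul_comm (φ _)]
  exact integral_mul_fderiv_eq_neg_fderiv_mul_of_integrable
    (((continuous_pd j hf).mul hφ.continuous).integrable_of_hasCompactSupport hc.mul_left)
    ((hf.continuous.mul (continuous_pd j hφ)).integrable_of_hasCompactSupport
      (hasCompactSupport_pd j hc).mul_left)
    ((hf.continuous.mul hφ.continuous).integrable_of_hasCompactSupport hc.mul_left)
    (fun x _ ↦ hf.differentiable one_ne_zero x) (fun x _ ↦ hφ.differentiable one_ne_zero x)

lemma integrableOn_mul_of_hasCompactSupport {s : Set V2} (hf : IntegrableOn f s)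
    (hφ : Continuous φ) (hc : HasCompactSupport φ) : IntegrableOn (fun x ↦ φ x * f x) s := by
  obtain ⟨M, hM⟩ := hφ.bounded_above_of_compact_support hc
  exact hf.bdd_mul hφ.aestronglyMeasurable (Eventually.of_forall hM)

end PartialDerivatives

section Slices

open Metric Function

lemma lintegral_lintegral_update {ι : Type*} [Fintype ι] [DecidableEq ι] {X : ι → Type*}
    [∀ i, MeasurableSpace (X i)] (μ : ∀ i, Measure (X i)) [∀ i, SigmaFinite (μ i)]
    {F : (∀ i, X i) → ℝ≥0∞} (hF : Measurable F) (i : ι) :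
    ∫⁻ p, ∫⁻ s, F (update p i s) ∂μ i ∂Measure.pi μ = μ i univ * ∫⁻ p, F p ∂Measure.pi μ := by
  rcases isEmpty_or_nonempty (∀ i, X i) with h | ⟨⟨p₀⟩⟩
  · simp [Subsingleton.elim (Measure.pi μ) 0]
  have hslice : Measurable fun p ↦ ∫⁻ s, F (update p i s) ∂μ i := by
    simpa only [lmarginal_singleton] using hF.lmarginal μ (s := {i})
  rw [lintegral_eq_lmarginal_univ p₀, lintegral_eq_lmarginal_univ (μ := μ) (f := F) p₀,
    lmarginal_erase' _ hslice (Finset.mem_univ i), lmarginal_erase' _ hF (Finset.mem_univ i)]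
  simp only [update_idem, lintegral_const, lmarginal]
  exact (lintegral_mul_const _ (hslice.comp measurable_updateFinset)).trans (mul_comm _ _)

lemma enorm_sub_le_lintegral_of_hasDerivAt {f f' : ℝ → ℝ} (hf : ∀ t, HasDerivAt f (f' t) t)
    (hf' : Continuous f') {s : Set ℝ} [hs : s.OrdConnected] {a b : ℝ} (ha : a ∈ s) (hb : b ∈ s) :
    ‖f a - f b‖ₑ ≤ ∫⁻ t in s, ‖f' t‖ₑ := by
  rw [← intervalIntegral.integral_eq_sub_of_hasDerivAt (fun t _ ↦ hf t)
    (hf'.intervalIntegrable _ _), ← ofReal_norm, intervalIntegral.norm_intervalIntegral_eq,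
    ofReal_norm]
  exact (enorm_integral_le_lintegral_enorm _).trans
    (lintegral_mono_set (uIoc_subset_uIcc.trans (hs.uIcc_subset hb ha)))

variable {H : V2 → ℝ} {x p q : V2} {r : ℝ}

lemma volume_closedBall_V2 (x : V2) (hr : 0 ≤ r) :
    volume (closedBall x r) = ENNReal.ofReal (2 * r) ^ 2 := by
  rw [Real.volume_pi_closedBall x hr, Fintype.card_fin, ENNReal.ofReal_pow (by positivity)]

lemma lintegral_closedBall_lintegral_update (hr : 0 ≤ r) {F : V2 → ℝ≥0∞} (hF : Measurable F)
    (i : Fin 2) : ∫⁻ p in closedBall x r, ∫⁻ s in closedBall (x i) r, F (update p i s) =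
      ENNReal.ofReal (2 * r) * ∫⁻ p in closedBall x r, F p := by
  rw [closedBall_pi x hr, volume_pi, Measure.restrict_pi_pi,
    lintegral_lintegral_update (fun i ↦ volume.restrict (closedBall (x i) r)) hF,
    Measure.restrict_apply_univ, Real.volume_closedBall]

lemma apply_mem_closedBall (hp : p ∈ closedBall x r) (i : Fin 2) : p i ∈ closedBall (x i) r :=
  (dist_le_pi_dist p x i).trans hp

lemma enorm_sub_le_lintegral_update (hH : ContDiff ℝ 1 H) (hp : p ∈ closedBall x r)
    (hq : q ∈ closedBall x r) :
    ‖H p - H q‖ₑ ≤ (∫⁻ s in closedBall (x 0) r, ‖pd 0 H (update p 0 s)‖ₑ) +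
      ∫⁻ s in closedBall (x 1) r, ‖pd 1 H (update q 1 s)‖ₑ := by
  have hslice (z : V2) (i : Fin 2) {a b : ℝ} (ha : a ∈ closedBall (x i) r)
      (hb : b ∈ closedBall (x i) r) : ‖H (update z i a) - H (update z i b)‖ₑ ≤
        ∫⁻ s in closedBall (x i) r, ‖pd i H (update z i s)‖ₑ := by
    rw [Real.closedBall_eq_Icc] at *
    exact enorm_sub_le_lintegral_of_hasDerivAt (hasDerivAt_comp_update hH z i)
      ((continuous_pd i hH).comp (continuous_const.update i continuous_id)) ha hb
  have hcorner : update p 0 (q 0) = update q 1 (p 1) := by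
    ext i; fin_cases i <;> simp
  have hsplit : H p - H q = (H (update p 0 (p 0)) - H (update p 0 (q 0))) +
      (H (update q 1 (p 1)) - H (update q 1 (q 1))) := by
    rw [hcorner, update_eq_self, update_eq_self]; ring
  rw [hsplit]
  exact (enorm_add_le _ _).trans (add_le_add
    (hslice p 0 (apply_mem_closedBall hp 0) (apply_mem_closedBall hq 0))
    (hslice q 1 (apply_mem_closedBall hp 1) (apply_mem_closedBall hq 1)))

lemma measurable_lintegral_update {F : V2 → ℝ≥0∞} (hF : Measurable F) (i : Fin 2) (s : Set ℝ) :
    Measurable fun p ↦ ∫⁻ t in s, F (update p i t) :=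
  Measurable.lintegral_prod_right' (f := fun z : V2 × ℝ ↦ F (update z.1 i z.2))
    (hF.comp (by fun_prop))

lemma lintegral_lintegral_enorm_sub_le (hH : ContDiff ℝ 1 H) (x : V2) (hr : 0 ≤ r) :
    ∫⁻ p in closedBall x r, ∫⁻ q in closedBall x r, ‖H p - H q‖ₑ ≤
      ENNReal.ofReal (2 * r) ^ 3 * ((∫⁻ p in closedBall x r, ‖pd 0 H p‖ₑ) +
        ∫⁻ p in closedBall x r, ‖pd 1 H p‖ₑ) := by
  have hm (j : Fin 2) : Measurable fun p ↦ ‖pd j H p‖ₑ := (continuous_pd j hH).measurable.enorm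
  set ℓ := ENNReal.ofReal (2 * r)
  set D : Fin 2 → V2 → ℝ≥0∞ := fun j p ↦ ∫⁻ s in closedBall (x j) r, ‖pd j H (update p j s)‖ₑ
  have hD (j : Fin 2) : ∫⁻ p in closedBall x r, D j p = ℓ * ∫⁻ p in closedBall x r, ‖pd j H p‖ₑ :=
    lintegral_closedBall_lintegral_update hr (hm j) j
  calc ∫⁻ p in closedBall x r, ∫⁻ q in closedBall x r, ‖H p - H q‖ₑ
      ≤ ∫⁻ p in closedBall x r, ∫⁻ q in closedBall x r, (D 0 p + D 1 q) :=
        setLIntegral_mono' measurableSet_closedBall fun p hp ↦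
          setLIntegral_mono' measurableSet_closedBall fun q hq ↦
            enorm_sub_le_lintegral_update hH hp hq
    _ = ℓ ^ 2 * (∫⁻ p in closedBall x r, D 0 p) + ℓ ^ 2 * ∫⁻ q in closedBall x r, D 1 q := by
        simp only [lintegral_add_left measurable_const, lintegral_const,
          Measure.restrict_apply_univ, volume_closedBall_V2 x hr, ℓ]
        rw [lintegral_add_right _ measurable_const, lintegral_const, Measure.restrict_apply_univ,
          volume_closedBall_V2 x hr,
          lintegral_mul_const _ (measurable_lintegral_update (hm 0) 0 _), mul_comm,
          mul_comm (∫⁻ q in closedBall x r, D 1 q)]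
    _ = _ := by rw [hD, hD]; ring

lemma enorm_le_of_enorm_pd_zero_le (hH : ContDiff ℝ 1 H) (x : V2) (hr : 0 ≤ r) {C : ℝ≥0∞}
    (hC : ∀ p ∈ closedBall x r, ‖pd 0 H p‖ₑ ≤ C) :
    ENNReal.ofReal (2 * r) ^ 2 * ‖H x‖ₑ ≤ ENNReal.ofReal (2 * r) ^ 3 * C +
      (∫⁻ p in closedBall x r, ‖H p‖ₑ) +
        ENNReal.ofReal (2 * r) * ∫⁻ p in closedBall x r, ‖pd 1 H p‖ₑ := by
  have hm : Measurable fun p ↦ ‖pd 1 H p‖ₑ := (continuous_pd 1 hH).measurable.enorm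
  have hHm : Measurable fun p ↦ ‖H p‖ₑ := hH.continuous.measurable.enorm
  have hx : x ∈ closedBall x r := mem_closedBall_self hr
  set ℓ := ENNReal.ofReal (2 * r)
  set D : V2 → ℝ≥0∞ := fun p ↦ ∫⁻ s in closedBall (x 1) r, ‖pd 1 H (update p 1 s)‖ₑ
  have hhor : ∫⁻ s in closedBall (x 0) r, ‖pd 0 H (update x 0 s)‖ₑ ≤ C * ℓ := by
    refine (setLIntegral_mono' measurableSet_closedBall fun s hs ↦ hC _ ?_).trans_eq ?_
    · rw [mem_closedBall, dist_pi_le_iff hr]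
      intro i; fin_cases i
      · simpa using hs
      · simpa using hr
    · rw [setLIntegral_const, Real.volume_closedBall]
  have hpoint (q : V2) (hq : q ∈ closedBall x r) : ‖H x‖ₑ ≤ C * ℓ + ‖H q‖ₑ + D q := by
    calc ‖H x‖ₑ = ‖(H x - H q) + H q‖ₑ := by rw [sub_add_cancel]
      _ ≤ ‖H x - H q‖ₑ + ‖H q‖ₑ := enorm_add_le _ _
      _ ≤ (C * ℓ + D q) + ‖H q‖ₑ := by
          gcongr
          exact (enorm_sub_le_lintegral_update hH hx hq).trans (add_le_add_left hhor _)
      _ = _ := add_right_comm _ _ _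
  calc ℓ ^ 2 * ‖H x‖ₑ = ∫⁻ _ in closedBall x r, ‖H x‖ₑ := by
        rw [setLIntegral_const, volume_closedBall_V2 x hr, mul_comm]
    _ ≤ ∫⁻ q in closedBall x r, (C * ℓ + ‖H q‖ₑ + D q) :=
        setLIntegral_mono' measurableSet_closedBall hpoint
    _ = C * ℓ * ℓ ^ 2 + (∫⁻ q in closedBall x r, ‖H q‖ₑ) + ∫⁻ q in closedBall x r, D q := by
        rw [lintegral_add_right _ (measurable_lintegral_update hm 1 _),
          lintegral_add_right _ hHm, setLIntegral_const, volume_closedBall_V2 x hr]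
    _ = _ := by rw [lintegral_closedBall_lintegral_update hr hm 1]; ring

end Slices

section DoubleIntegral

variable {α : Type*} [MeasurableSpace α] {μ : Measure α} [SFinite μ] {f : α → ℝ}

lemma aemeasurable_lintegral_enorm_sub (hf : AEMeasurable f μ) :
    AEMeasurable (fun p ↦ ∫⁻ q, ‖f p - f q‖ₑ ∂μ) μ :=
  AEMeasurable.lintegral_prod_right' (f := fun z : α × α ↦ ‖f z.1 - f z.2‖ₑ)
    (hf.comp_fst.sub hf.comp_snd).enorm

lemma lintegral_lintegral_enorm_sub_le_of_tendsto {F : ℕ → α → ℝ} {K : ℝ≥0∞}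
    (hF : ∀ k, AEMeasurable (F k) μ) (hlim : ∀ᵐ p ∂μ, Tendsto (fun k ↦ F k p) atTop (𝓝 (f p)))
    (hK : ∀ᶠ k in atTop, ∫⁻ p, ∫⁻ q, ‖F k p - F k q‖ₑ ∂μ ∂μ ≤ K) :
    ∫⁻ p, ∫⁻ q, ‖f p - f q‖ₑ ∂μ ∂μ ≤ K := by
  calc ∫⁻ p, ∫⁻ q, ‖f p - f q‖ₑ ∂μ ∂μ
      ≤ ∫⁻ p, liminf (fun k ↦ ∫⁻ q, ‖F k p - F k q‖ₑ ∂μ) atTop ∂μ := by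
        refine lintegral_mono_ae (hlim.mono fun p hp ↦ ?_)
        refine (lintegral_mono_ae (hlim.mono fun q hq ↦ ?_)).trans
          (lintegral_liminf_le' fun k ↦ ((hF k).const_sub (F k p)).enorm)
        exact (hp.sub hq).enorm.liminf_eq.ge
    _ ≤ liminf (fun k ↦ ∫⁻ p, ∫⁻ q, ‖F k p - F k q‖ₑ ∂μ ∂μ) atTop :=
        lintegral_liminf_le' fun k ↦ aemeasurable_lintegral_enorm_sub (hF k)
    _ ≤ K := liminf_le_of_frequently_le' hK.frequently

lemma exists_measure_mul_lintegral_enorm_sub_le [IsFiniteMeasure μ] (hμ : μ ≠ 0)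
    (hf : AEMeasurable f μ) :
    ∃ c, μ univ * ∫⁻ q, ‖f q - c‖ₑ ∂μ ≤ ∫⁻ p, ∫⁻ q, ‖f p - f q‖ₑ ∂μ ∂μ := by
  obtain ⟨p, hp⟩ := exists_le_laverage hμ (aemeasurable_lintegral_enorm_sub hf)
  refine ⟨f p, ?_⟩
  simp only [enorm_sub_rev _ (f p)]
  calc _ ≤ μ univ * ⨍⁻ p, ∫⁻ q, ‖f p - f q‖ₑ ∂μ ∂μ := by gcongr
    _ = _ := measure_mul_laverage _ _

end DoubleIntegral

section ScalarBV

open Metric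

/-- `f ∈ BV(Ω)` with distributional derivatives `∂ⱼf = g j · L² + s j · σ`: the scalar counterpart
of `HasBVDerivOn`, with a polar density that is merely bounded by one. The choice `σ = 0`, `s = 0`
gives `f ∈ W^{1,1}(Ω)`. -/
structure HasScalarBVDerivOn (Ω : Set V2) (f : V2 → ℝ) (g : Fin 2 → V2 → ℝ) (σ : Measure V2)
    (s : Fin 2 → V2 → ℝ) : Prop where
  integrableOn : IntegrableOn f Ω
  integrableOn_deriv : ∀ j, IntegrableOn (g j) Ω
  isFiniteMeasure : IsFiniteMeasure σ
  aemeasurable_polar : ∀ j, AEMeasurable (s j) σ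
  abs_polar_le_one : ∀ j, ∀ᵐ x ∂σ, |s j x| ≤ 1
  integral_mul_pd : ∀ φ : V2 → ℝ, ContDiff ℝ (⊤ : ℕ∞) φ → HasCompactSupport φ → tsupport φ ⊆ Ω →
    ∀ j, ∫ x in Ω, f x * pd j φ x = (-∫ x in Ω, φ x * g j x) - ∫ x, φ x * s j x ∂σ

namespace HasScalarBVDerivOn

variable {Ω Ω' : Set V2} {f F φ : V2 → ℝ} {g s : Fin 2 → V2 → ℝ} {σ : Measure V2}

lemma mono (h : HasScalarBVDerivOn Ω f g σ s) (hΩ' : Ω' ⊆ Ω) :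
    HasScalarBVDerivOn Ω' f g σ s where
  integrableOn := h.integrableOn.mono_set hΩ'
  integrableOn_deriv j := (h.integrableOn_deriv j).mono_set hΩ'
  isFiniteMeasure := h.isFiniteMeasure
  aemeasurable_polar := h.aemeasurable_polar
  abs_polar_le_one := h.abs_polar_le_one
  integral_mul_pd φ hφ hc hs j := by
    have hrestrict {a b : V2 → ℝ} (ha : ∀ x ∉ tsupport φ, a x = 0) :
        ∫ x in Ω', b x * a x = ∫ x in Ω, b x * a x := by
      rw [setIntegral_eq_integral_of_forall_compl_eq_zero fun x hx ↦ by
          rw [ha x fun hxs ↦ hx (hs hxs), mul_zero],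
        setIntegral_eq_integral_of_forall_compl_eq_zero fun x hx ↦ by
          rw [ha x fun hxs ↦ hx (hΩ' (hs hxs)), mul_zero]]
    have hibp := h.integral_mul_pd φ hφ hc (hs.trans hΩ') j
    simp only [mul_comm (φ _) (g j _)] at hibp ⊢
    rwa [hrestrict fun x hx ↦ pd_eq_zero_of_notMem_tsupport j hx,
      hrestrict fun x hx ↦ image_eq_zero_of_notMem_tsupport hx]

lemma sub_contDiff (h : HasScalarBVDerivOn Ω f g σ s) (hΩ : Bornology.IsBounded Ω)
    (hF : ContDiff ℝ 1 F) :
    HasScalarBVDerivOn Ω (fun x ↦ f x - F x) (fun j x ↦ g j x - pd j F x) σ s := by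
  have hint {G : V2 → ℝ} (hG : Continuous G) : IntegrableOn G Ω :=
    (hG.continuousOn.integrableOn_compact hΩ.isCompact_closure).mono_set subset_closure
  have hF' (j : Fin 2) : IntegrableOn (pd j F) Ω := hint (continuous_pd j hF)
  refine ⟨h.integrableOn.sub (hint hF.continuous),
    fun j ↦ (h.integrableOn_deriv j).sub (hF' j), h.isFiniteMeasure,
    h.aemeasurable_polar, h.abs_polar_le_one, fun φ hφ hc hs j ↦ ?_⟩
  have hφ₁ : ContDiff ℝ 1 φ := hφ.of_le (by exact_mod_cast le_top)
  have hmul {u : V2 → ℝ} (hu : IntegrableOn u Ω) : IntegrableOn (fun x ↦ pd j φ x * u x) Ω :=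
    integrableOn_mul_of_hasCompactSupport hu (continuous_pd j hφ₁) (hasCompactSupport_pd j hc)
  have hF_ibp : ∫ x in Ω, F x * pd j φ x = -∫ x in Ω, φ x * pd j F x := by
    rw [setIntegral_eq_integral_of_forall_compl_eq_zero fun x hx ↦ by
        rw [pd_eq_zero_of_notMem_tsupport j fun hxs ↦ hx (hs hxs), mul_zero],
      setIntegral_eq_integral_of_forall_compl_eq_zero fun x hx ↦ by
        rw [image_eq_zero_of_notMem_tsupport fun hxs ↦ hx (hs hxs), zero_mul],
      integral_mul_pd_eq_neg j hF hφ₁ hc]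
  have hf_ibp := h.integral_mul_pd φ hφ hc hs j
  simp only [mul_comm _ (pd j φ _), mul_sub] at hf_ibp hF_ibp ⊢
  rw [integral_sub (hmul h.integrableOn) (hmul (hint hF.continuous)),
    integral_sub (integrableOn_mul_of_hasCompactSupport (h.integrableOn_deriv j) hφ.continuous hc)
      (integrableOn_mul_of_hasCompactSupport (hF' j) hφ.continuous hc), hf_ibp, hF_ibp]
  ring

lemma pd_mollify (h : HasScalarBVDerivOn Ω f g σ s) (ρ : ContDiffBump (0 : V2)) {x : V2}
    (hx : closedBall x ρ.rOut ⊆ Ω) (j : Fin 2) :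
    pd j (mollify ρ (volume.restrict Ω) f) x =
      mollify ρ (volume.restrict Ω) (g j) x + mollify ρ σ (s j) x := by
  have hsub := tsupport_normed_sub_subset ρ x
  have hkernel (y : V2) : pd j (fun y ↦ ρ.normed volume (x - y)) y =
      -fderiv ℝ (ρ.normed volume) (x - y) (Pi.single j 1) := by
    have hd := ((ρ.contDiff_normed (μ := volume) (n := 1)).differentiable one_ne_zero
      (x - y)).hasFDerivAt.comp y ((hasFDerivAt_id y).const_sub x)
    have hd' : fderiv ℝ (fun y ↦ ρ.normed volume (x - y)) y = _ := hd.fderiv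
    rw [pd, hd']
    simp
  have hibp := h.integral_mul_pd (fun y ↦ ρ.normed volume (x - y))
    (ρ.contDiff_normed.comp (contDiff_const.sub contDiff_id))
    ((isCompact_closedBall x _).of_isClosed_subset (isClosed_tsupport _) hsub) (hsub.trans hx) j
  simp only [hkernel, mul_comm (f _), neg_mul, integral_neg] at hibp
  rw [pd, fderiv_mollify_apply ρ h.integrableOn, mollify, mollify]
  linarith

lemma setLIntegral_enorm_mollify_restrict_le {u : V2 → ℝ} {x : V2} {r R : ℝ}
    (ρ : ContDiffBump (0 : V2)) (hu : IntegrableOn u Ω) (hR : r + ρ.rOut ≤ R)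
    (hx : closedBall x R ⊆ Ω) :
    ∫⁻ p in closedBall x r, ‖mollify ρ (volume.restrict Ω) u p‖ₑ ≤
      ∫⁻ p in closedBall x R, ‖u p‖ₑ := by
  refine (lintegral_enorm_mollify_le ρ hu.aemeasurable x r).trans
    ((lintegral_mono_set (closedBall_subset_closedBall hR)).trans_eq ?_)
  rw [Measure.restrict_restrict_of_subset hx]

lemma setLIntegral_enorm_pd_mollify_le (h : HasScalarBVDerivOn Ω f g σ s)
    (ρ : ContDiffBump (0 : V2)) {x : V2} {r R : ℝ} (hR : r + ρ.rOut ≤ R)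
    (hx : closedBall x R ⊆ Ω) (j : Fin 2) :
    ∫⁻ p in closedBall x r, ‖pd j (mollify ρ (volume.restrict Ω) f) p‖ₑ ≤
      (∫⁻ p in closedBall x R, ‖g j p‖ₑ) + σ (closedBall x R) := by
  have := h.isFiniteMeasure
  have hcont : Continuous (mollify ρ (volume.restrict Ω) (g j)) :=
    (contDiff_mollify ρ (h.integrableOn_deriv j).locallyIntegrable).continuous
  calc ∫⁻ p in closedBall x r, ‖pd j (mollify ρ (volume.restrict Ω) f) p‖ₑ
      ≤ ∫⁻ p in closedBall x r,
          (‖mollify ρ (volume.restrict Ω) (g j) p‖ₑ + ‖mollify ρ σ (s j) p‖ₑ) := by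
        refine setLIntegral_mono' measurableSet_closedBall fun p hp ↦ ?_
        rw [h.pd_mollify ρ ((closedBall_subset_closedBall' ?_).trans hx) j]
        · exact enorm_add_le _ _
        · linarith [mem_closedBall.1 hp]
    _ = (∫⁻ p in closedBall x r, ‖mollify ρ (volume.restrict Ω) (g j) p‖ₑ) +
          ∫⁻ p in closedBall x r, ‖mollify ρ σ (s j) p‖ₑ :=
        lintegral_add_left hcont.measurable.enorm _
    _ ≤ _ := by
        refine add_le_add
          (setLIntegral_enorm_mollify_restrict_le ρ (h.integrableOn_deriv j) hR hx) ?_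
        calc ∫⁻ p in closedBall x r, ‖mollify ρ σ (s j) p‖ₑ
            ≤ ∫⁻ y in closedBall x (r + ρ.rOut), ‖s j y‖ₑ ∂σ :=
              lintegral_enorm_mollify_le ρ (h.aemeasurable_polar j) x r
          _ ≤ ∫⁻ _ in closedBall x (r + ρ.rOut), 1 ∂σ := by
              refine lintegral_mono_ae ((ae_restrict_of_ae (h.abs_polar_le_one j)).mono
                fun y hy ↦ ?_)
              rw [← ofReal_norm, Real.norm_eq_abs]
              exact ENNReal.ofReal_le_one.2 hy
          _ ≤ σ (closedBall x R) := by
              rw [setLIntegral_one]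
              exact measure_mono (closedBall_subset_closedBall hR)

lemma setLIntegral_setLIntegral_enorm_sub_le (h : HasScalarBVDerivOn Ω f g σ s)
    (hΩ : MeasurableSet Ω) {x : V2} {r : ℝ} (hr : 0 < r) (hx : closedBall x (2 * r) ⊆ Ω) :
    ∫⁻ p in closedBall x r, ∫⁻ q in closedBall x r, ‖f p - f q‖ₑ ≤
      ENNReal.ofReal (2 * r) ^ 3 * ((∫⁻ p in closedBall x (2 * r), ‖g 0 p‖ₑ) +
        (∫⁻ p in closedBall x (2 * r), ‖g 1 p‖ₑ) + 2 * σ (closedBall x (2 * r))) := by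
  have hball : closedBall x r ⊆ closedBall x (2 * r) := closedBall_subset_closedBall (by linarith)
  have hsmooth (k : ℕ) := contDiff_mollify (shrinkingBump V2 k) h.integrableOn.locallyIntegrable
  refine lintegral_lintegral_enorm_sub_le_of_tendsto
    (fun k ↦ (hsmooth k).continuous.aemeasurable)
    (ae_restrict_of_ae_restrict_of_subset (hball.trans hx)
      (ae_tendsto_mollify_shrinkingBump hΩ h.integrableOn)) ?_
  filter_upwards [eventually_rOut_shrinkingBump_le (E := V2) hr] with k hk
  have hpd := h.setLIntegral_enorm_pd_mollify_le (shrinkingBump V2 k) (r := r)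
    (by linarith) hx
  refine (lintegral_lintegral_enorm_sub_le ((hsmooth k).of_le (by exact_mod_cast le_top)) x
    hr.le).trans ?_
  refine mul_le_mul_right ((add_le_add (hpd 0) (hpd 1)).trans_eq ?_) _
  ring

lemma exists_integral_abs_sub_le (h : HasScalarBVDerivOn Ω f g σ s) (hΩ : MeasurableSet Ω)
    {x : V2} {r : ℝ} (hr : 0 < r) (hx : closedBall x (2 * r) ⊆ Ω) :
    ∃ c, ∫ p in closedBall x r, |f p - c| ≤ 2 * r * ((∫ p in closedBall x (2 * r), |g 0 p|) +
      (∫ p in closedBall x (2 * r), |g 1 p|) + 2 * σ.real (closedBall x (2 * r))) := by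
  have := h.isFiniteMeasure
  have hvol := volume_closedBall_V2 x hr.le
  have : IsFiniteMeasure (volume.restrict (closedBall x r)) :=
    isFiniteMeasure_restrict.2 (isCompact_closedBall x r).measure_lt_top.ne
  have hℓ : ENNReal.ofReal (2 * r) ≠ 0 := by simpa using hr
  have hf : IntegrableOn f (closedBall x r) :=
    h.integrableOn.mono_set ((closedBall_subset_closedBall (by linarith)).trans hx)
  obtain ⟨c, hc⟩ := exists_measure_mul_lintegral_enorm_sub_le
    (μ := volume.restrict (closedBall x r))
    (by rw [Ne, Measure.restrict_eq_zero, hvol]; exact pow_ne_zero _ hℓ) hf.aemeasurable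
  have hmean : ∫⁻ p in closedBall x r, ‖f p - c‖ₑ ≤ ENNReal.ofReal (2 * r) *
      ((∫⁻ p in closedBall x (2 * r), ‖g 0 p‖ₑ) + (∫⁻ p in closedBall x (2 * r), ‖g 1 p‖ₑ) +
        2 * σ (closedBall x (2 * r))) := by
    rw [Measure.restrict_apply_univ, hvol] at hc
    refine (ENNReal.mul_le_mul_iff_right (pow_ne_zero 2 hℓ)
      (ENNReal.pow_ne_top ENNReal.ofReal_ne_top)).1
      ((hc.trans (h.setLIntegral_setLIntegral_enorm_sub_le hΩ hr hx)).trans_eq ?_)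
    ring
  refine ⟨c, (ENNReal.ofReal_le_ofReal_iff (by positivity)).1 ?_⟩
  have hg (j : Fin 2) := ofReal_integral_norm_eq_lintegral_enorm
    ((h.integrableOn_deriv j).mono_set hx)
  have hfc := ofReal_integral_norm_eq_lintegral_enorm (hf.sub (integrable_const c))
  simp only [Real.norm_eq_abs, Pi.sub_apply] at hg hfc
  rwa [ENNReal.ofReal_mul (p := 2 * r) (by positivity),
    ENNReal.ofReal_add (by positivity) (by positivity),
    ENNReal.ofReal_add (by positivity) (by positivity),
    ENNReal.ofReal_mul (q := σ.real (closedBall x (2 * r))) zero_le_two, hg, hg, hfc,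
    ofReal_measureReal, ENNReal.ofReal_ofNat]

lemma ae_mul_abs_le (h : HasScalarBVDerivOn Ω f g 0 0) (hΩ : MeasurableSet Ω) {η C : ℝ}
    (hη : 0 < η) (hC₀ : 0 ≤ C) (hC : ∀ᵐ x ∂volume.restrict Ω, |g 0 x| ≤ C) :
    ∀ᵐ x ∂volume.restrict Ω, closedBall x (2 * η) ⊆ Ω →
      (2 * η) ^ 2 * |f x| ≤ (2 * η) ^ 3 * C + (∫ p in closedBall x (2 * η), |f p|) +
        2 * η * ∫ p in closedBall x (2 * η), |g 1 p| := by
  filter_upwards [ae_tendsto_mollify_shrinkingBump hΩ h.integrableOn] with x hlim hx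
  have hsmooth (k : ℕ) := contDiff_mollify (shrinkingBump V2 k) h.integrableOn.locallyIntegrable
  have hbound : ENNReal.ofReal (2 * η) ^ 2 * ‖f x‖ₑ ≤
      ENNReal.ofReal (2 * η) ^ 3 * ENNReal.ofReal C +
        (∫⁻ p in closedBall x (2 * η), ‖f p‖ₑ) +
          ENNReal.ofReal (2 * η) * ∫⁻ p in closedBall x (2 * η), ‖g 1 p‖ₑ := by
    refine le_of_tendsto (ENNReal.Tendsto.const_mul hlim.enorm
      (Or.inr (ENNReal.pow_ne_top ENNReal.ofReal_ne_top))) ?_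
    filter_upwards [eventually_rOut_shrinkingBump_le (E := V2) hη] with k hk
    have hle : η + (shrinkingBump V2 k).rOut ≤ 2 * η := by linarith
    refine (enorm_le_of_enorm_pd_zero_le ((hsmooth k).of_le (by exact_mod_cast le_top)) x hη.le
      (C := ENNReal.ofReal C) fun p hp ↦ ?_).trans ?_
    · rw [h.pd_mollify _ ((closedBall_subset_closedBall' (by linarith [mem_closedBall.1 hp])).trans
        hx), mollify_zero_measure, Pi.zero_apply, add_zero, ← ofReal_norm]
      exact ENNReal.ofReal_le_ofReal (abs_mollify_le _ Measure.restrict_le_self hC₀ hC p)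
    · refine add_le_add (add_le_add le_rfl
        (setLIntegral_enorm_mollify_restrict_le _ h.integrableOn hle hx)) (mul_le_mul_right ?_ _)
      simpa using h.setLIntegral_enorm_pd_mollify_le _ hle hx 1
  have hf := ofReal_integral_norm_eq_lintegral_enorm (h.integrableOn.mono_set hx)
  have hg := ofReal_integral_norm_eq_lintegral_enorm ((h.integrableOn_deriv 1).mono_set hx)
  simp only [Real.norm_eq_abs] at hf hg
  refine (ENNReal.ofReal_le_ofReal_iff (by positivity)).1 ?_
  rwa [ENNReal.ofReal_add (by positivity) (by positivity),
    ENNReal.ofReal_add (by positivity) (by positivity), ENNReal.ofReal_mul (by positivity),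
    ENNReal.ofReal_mul (by positivity), ENNReal.ofReal_mul (p := 2 * η) (by positivity),
    ENNReal.ofReal_pow (by positivity), ENNReal.ofReal_pow (by positivity), hf, hg,
    ← Real.norm_eq_abs, ofReal_norm]

end HasScalarBVDerivOn

end ScalarBV

section WeakJacobian

open Metric

variable {Ω : Set V2} {f f' φ G : V2 → ℝ} {g g' s : Fin 2 → V2 → ℝ} {σ : Measure V2}

lemma abs_integral_mul_sub_le {a : V2 → ℝ} {B : Set V2} (hB : IsCompact B) (hBΩ : B ⊆ Ω)
    (ha : IntegrableOn a B) (hφ : Continuous φ) (hφB : tsupport φ ⊆ B) (hφ_le : ∀ x, |φ x| ≤ 1)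
    (l : ℝ) : |(∫ x in Ω, φ x * a x) - l * ∫ x, φ x| ≤ ∫ x in B, |a x - l| := by
  have hc : HasCompactSupport φ := hB.of_isClosed_subset (isClosed_tsupport φ) hφB
  have hzero (x : V2) (hx : x ∉ B) : φ x = 0 :=
    image_eq_zero_of_notMem_tsupport fun hx' ↦ hx (hφB hx')
  rw [setIntegral_eq_integral_of_forall_compl_eq_zero fun x hx ↦ by
      rw [hzero x fun hx' ↦ hx (hBΩ hx'), zero_mul],
    ← setIntegral_eq_integral_of_forall_compl_eq_zero (s := B) fun x hx ↦ by
      rw [hzero x hx, zero_mul],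
    ← setIntegral_eq_integral_of_forall_compl_eq_zero hzero, ← integral_const_mul,
    ← integral_sub (integrableOn_mul_of_hasCompactSupport ha hφ hc)
      ((hφ.integrable_of_hasCompactSupport hc).integrableOn.const_mul l), ← Real.norm_eq_abs]
  refine norm_integral_le_of_norm_le
    (ha.sub (integrableOn_const hB.measure_lt_top.ne)).abs (ae_of_all _ fun x ↦ ?_)
  rw [Real.norm_eq_abs, mul_comm l, ← mul_sub, abs_mul]
  exact mul_le_of_le_one_left (abs_nonneg _) (hφ_le x)

lemma abs_integral_mul_pd_sub_le (hf : IntegrableOn f Ω) (hf' : IntegrableOn f' Ω)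
    (hφ : ContDiff ℝ (⊤ : ℕ∞) φ) (hc : HasCompactSupport φ) {j : Fin 2} {K : ℝ}
    (hK : ∀ x, |pd j φ x| ≤ K) :
    |(∫ x in Ω, f' x * pd j φ x) - ∫ x in Ω, f x * pd j φ x| ≤ K * ∫ x in Ω, |f' x - f x| := by
  have hpd {F : V2 → ℝ} (hF : IntegrableOn F Ω) : IntegrableOn (fun x ↦ F x * pd j φ x) Ω := by
    simpa only [mul_comm] using integrableOn_mul_of_hasCompactSupport hF
      (contDiff_pd j hφ).continuous (hasCompactSupport_pd j hc)
  rw [← integral_sub (hpd hf') (hpd hf), ← integral_const_mul, ← Real.norm_eq_abs]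
  refine norm_integral_le_of_norm_le ((hf'.sub hf).abs.const_mul K) (ae_of_all _ fun x ↦ ?_)
  rw [Real.norm_eq_abs, ← sub_mul, abs_mul, mul_comm]
  exact mul_le_mul_of_nonneg_right (hK x) (abs_nonneg _)

namespace HasScalarBVDerivOn

lemma integral_mul_jacobian_eq_neg (h : HasScalarBVDerivOn Ω f g 0 0)
    (hφ : ContDiff ℝ (⊤ : ℕ∞) φ) (hc : HasCompactSupport φ) (hsub : tsupport φ ⊆ Ω)
    (hG : ContDiff ℝ (⊤ : ℕ∞) G) :
    ∫ x in Ω, φ x * (g 0 x * pd 1 G x - g 1 x * pd 0 G x) =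
      -∫ x in Ω, f x * (pd 0 φ x * pd 1 G x - pd 1 φ x * pd 0 G x) := by
  have hψ (j : Fin 2) : ContDiff ℝ (⊤ : ℕ∞) (fun x ↦ φ x * pd j G x) := hφ.mul (contDiff_pd j hG)
  have hψc (j : Fin 2) : HasCompactSupport (fun x ↦ φ x * pd j G x) := hc.mul_right
  have hibp (i j : Fin 2) := h.integral_mul_pd _ (hψ j) (hψc j)
    (tsupport_mul_subset_left.trans hsub) i
  simp only [integral_zero_measure, sub_zero] at hibp
  have hint (i j : Fin 2) : IntegrableOn (fun x ↦ φ x * pd j G x * g i x) Ω :=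
    integrableOn_mul_of_hasCompactSupport (h.integrableOn_deriv i) (hψ j).continuous (hψc j)
  have hint' (i j : Fin 2) : IntegrableOn (fun x ↦ f x * pd i (fun y ↦ φ y * pd j G y) x) Ω := by
    simpa only [mul_comm] using integrableOn_mul_of_hasCompactSupport h.integrableOn
      (contDiff_pd i (hψ j)).continuous (hasCompactSupport_pd i (hψc j))
  have hdiff {F : V2 → ℝ} (hF : ContDiff ℝ (⊤ : ℕ∞) F) (x : V2) : DifferentiableAt ℝ F x :=
    hF.differentiable (by simp) x
  calc ∫ x in Ω, φ x * (g 0 x * pd 1 G x - g 1 x * pd 0 G x)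
      = (∫ x in Ω, φ x * pd 1 G x * g 0 x) - ∫ x in Ω, φ x * pd 0 G x * g 1 x := by
        rw [← integral_sub (hint 0 1) (hint 1 0)]
        congr 1 with x
        ring
    _ = -((∫ x in Ω, f x * pd 0 (fun y ↦ φ y * pd 1 G y) x) -
          ∫ x in Ω, f x * pd 1 (fun y ↦ φ y * pd 0 G y) x) := by
        rw [hibp 0 1, hibp 1 0]
        ring
    _ = -∫ x in Ω, f x * (pd 0 φ x * pd 1 G x - pd 1 φ x * pd 0 G x) := by
        rw [← integral_sub (hint' 0 1) (hint' 1 0)]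
        congr 2 with x
        rw [pd_mul 0 (hdiff hφ x) (hdiff (contDiff_pd 1 hG) x),
          pd_mul 1 (hdiff hφ x) (hdiff (contDiff_pd 0 hG) x),
          pd_comm 0 1 (hG.of_le (WithTop.coe_le_coe.2 le_top))]
        ring

lemma abs_integral_mul_jacobian_le_of_contDiff (h : HasScalarBVDerivOn Ω f g 0 0) {B : Set V2}
    {S K : ℝ} (hB : IsCompact B) (hBΩ : B ⊆ Ω) (hS : ∀ᵐ x ∂volume.restrict B, |f x| ≤ S)
    (hφ : ContDiff ℝ (⊤ : ℕ∞) φ) (hφB : tsupport φ ⊆ B) (hK : ∀ j x, |pd j φ x| ≤ K)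
    (hG : ContDiff ℝ (⊤ : ℕ∞) G) :
    |∫ x in Ω, φ x * (g 0 x * pd 1 G x - g 1 x * pd 0 G x)| ≤
      S * K * ((∫ x in B, |pd 0 G x|) + ∫ x in B, |pd 1 G x|) := by
  have hint (j : Fin 2) : IntegrableOn (fun x ↦ |pd j G x|) B :=
    (contDiff_pd j hG).continuous.abs.continuousOn.integrableOn_compact hB
  have hzero (x : V2) (hx : x ∉ B) : f x * (pd 0 φ x * pd 1 G x - pd 1 φ x * pd 0 G x) = 0 := by
    have hxφ : x ∉ tsupport φ := fun hx' ↦ hx (hφB hx')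
    simp [pd_eq_zero_of_notMem_tsupport _ hxφ]
  rw [h.integral_mul_jacobian_eq_neg hφ (hB.of_isClosed_subset (isClosed_tsupport φ) hφB)
    (hφB.trans hBΩ) hG, abs_neg,
    setIntegral_eq_integral_of_forall_compl_eq_zero fun x hx ↦ hzero x fun hx' ↦ hx (hBΩ hx'),
    ← setIntegral_eq_integral_of_forall_compl_eq_zero hzero, ← integral_add (hint 0) (hint 1),
    ← integral_const_mul, ← Real.norm_eq_abs]
  refine norm_integral_le_of_norm_le (((hint 0).add (hint 1)).const_mul _) ?_
  filter_upwards [hS] with x hx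
  have hgrad : |pd 0 φ x * pd 1 G x - pd 1 φ x * pd 0 G x| ≤
      K * (|pd 0 G x| + |pd 1 G x|) := by
    calc |pd 0 φ x * pd 1 G x - pd 1 φ x * pd 0 G x|
        ≤ |pd 0 φ x| * |pd 1 G x| + |pd 1 φ x| * |pd 0 G x| := by
          rw [← abs_mul, ← abs_mul]
          exact abs_sub _ _
      _ ≤ K * |pd 1 G x| + K * |pd 0 G x| := by gcongr <;> exact hK _ x
      _ = K * (|pd 0 G x| + |pd 1 G x|) := by ring
  rw [Real.norm_eq_abs, abs_mul, mul_assoc]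
  exact mul_le_mul hx hgrad (abs_nonneg _) ((abs_nonneg _).trans hx)

lemma pd_mollify_of_sobolev (h : HasScalarBVDerivOn Ω f g 0 0) (ρ : ContDiffBump (0 : V2)) {x : V2}
    (hx : closedBall x ρ.rOut ⊆ Ω) (j : Fin 2) :
    pd j (mollify ρ (volume.restrict Ω) f) x = mollify ρ (volume.restrict Ω) (g j) x := by
  rw [h.pd_mollify ρ hx, mollify_zero_measure, Pi.zero_apply, add_zero]

lemma tendsto_integral_mul_jacobian_mollify (h' : HasScalarBVDerivOn Ω f' g' 0 0)
    (hΩ : MeasurableSet Ω) {x₀ : V2} {r C C' : ℝ} (hr : 0 < r) (hx₀ : closedBall x₀ (2 * r) ⊆ Ω)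
    (hg : ∀ j, IntegrableOn (g j) Ω) (hC : ∀ᵐ x ∂volume.restrict Ω, |g 0 x| ≤ C)
    (hC' : ∀ᵐ x ∂volume.restrict Ω, |g' 0 x| ≤ C') (hφ : Continuous φ)
    (hφB : tsupport φ ⊆ closedBall x₀ r) :
    Tendsto (fun k ↦ ∫ x in Ω, φ x *
        (g 0 x * pd 1 (mollify (shrinkingBump V2 k) (volume.restrict Ω) f') x -
          g 1 x * pd 0 (mollify (shrinkingBump V2 k) (volume.restrict Ω) f') x))
      atTop (𝓝 (∫ x in Ω, φ x * (g 0 x * g' 1 x - g 1 x * g' 0 x))) := by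
  have hc : HasCompactSupport φ :=
    (isCompact_closedBall x₀ r).of_isClosed_subset (isClosed_tsupport φ) hφB
  obtain ⟨M, hM⟩ := hφ.bounded_above_of_compact_support hc
  have hφg (j : Fin 2) : IntegrableOn (fun x ↦ φ x * g j x) Ω :=
    integrableOn_mul_of_hasCompactSupport (hg j) hφ hc
  have hφg_le : ∀ᵐ x ∂volume.restrict Ω, |φ x * g 0 x| ≤ M * C := hC.mono fun x hx ↦ by
    rw [abs_mul]
    exact mul_le_mul (hM x) hx (abs_nonneg _) ((norm_nonneg _).trans (hM x))
  have hlim := (tendsto_integral_mul_mollify_of_bounded_left hΩ (hφg 0)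
    (h'.integrableOn_deriv 1) hφg_le).sub (tendsto_integral_mul_mollify_of_bounded_right hΩ
      (hφg 1) (h'.integrableOn_deriv 0) hC')
  have hlim_eq : ∫ x in Ω, φ x * (g 0 x * g' 1 x - g 1 x * g' 0 x) =
      (∫ x in Ω, φ x * g 0 x * g' 1 x) - ∫ x in Ω, φ x * g 1 x * g' 0 x := by
    rw [← integral_sub ((h'.integrableOn_deriv 1).bdd_mul (hφg 0).aestronglyMeasurable hφg_le)
      ((hφg 1).mul_bdd (h'.integrableOn_deriv 0).aestronglyMeasurable hC')]
    congr 1 with x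
    ring
  rw [hlim_eq]
  refine hlim.congr' ?_
  filter_upwards [eventually_rOut_shrinkingBump_le (E := V2) hr] with k hk
  have hpd (x : V2) (hx : x ∈ tsupport φ) (j : Fin 2) :=
    h'.pd_mollify_of_sobolev (shrinkingBump V2 k) (x := x)
      ((closedBall_subset_closedBall' (by linarith [mem_closedBall.1 (hφB hx)])).trans hx₀) j
  have hint (i j : Fin 2) : IntegrableOn (fun x ↦ φ x * g i x *
      mollify (shrinkingBump V2 k) (volume.restrict Ω) (g' j) x) Ω :=
    (integrableOn_mul_of_hasCompactSupport (hg i) (hφ.mul (contDiff_mollify (shrinkingBump V2 k)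
      (h'.integrableOn_deriv j).locallyIntegrable).continuous) hc.mul_right).congr
        (ae_of_all _ fun x ↦ mul_right_comm _ _ _)
  rw [← integral_sub (hint 0 1) (hint 1 0)]
  congr 1 with x
  by_cases hx : x ∈ tsupport φ
  · rw [hpd x hx, hpd x hx]
    ring
  · simp [image_eq_zero_of_notMem_tsupport hx]

lemma integral_abs_pd_mollify_le (h : HasScalarBVDerivOn Ω f g 0 0) (ρ : ContDiffBump (0 : V2))
    {x : V2} {r R : ℝ} (hR : r + ρ.rOut ≤ R) (hx : closedBall x R ⊆ Ω) (j : Fin 2) :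
    ∫ p in closedBall x r, |pd j (mollify ρ (volume.restrict Ω) f) p| ≤
      ∫ p in closedBall x R, |g j p| := by
  have hF : ContDiff ℝ (⊤ : ℕ∞) (mollify ρ (volume.restrict Ω) f) :=
    contDiff_mollify _ h.integrableOn.locallyIntegrable
  refine (ENNReal.ofReal_le_ofReal_iff (by positivity)).1 ?_
  have hg := ofReal_integral_norm_eq_lintegral_enorm ((h.integrableOn_deriv j).mono_set hx)
  have hpd := ofReal_integral_norm_eq_lintegral_enorm
    ((contDiff_pd j hF).continuous.continuousOn.integrableOn_compact (μ := volume)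
      (isCompact_closedBall x r))
  simp only [Real.norm_eq_abs] at hg hpd
  simpa [hg, hpd] using h.setLIntegral_enorm_pd_mollify_le ρ hR hx j

lemma abs_integral_mul_jacobian_le (h : HasScalarBVDerivOn Ω f g 0 0)
    (h' : HasScalarBVDerivOn Ω f' g' 0 0) (hΩ : MeasurableSet Ω) {x₀ : V2} {r S K C C' : ℝ}
    (hr : 0 < r) (hx₀ : closedBall x₀ (2 * r) ⊆ Ω) (hC : ∀ᵐ x ∂volume.restrict Ω, |g 0 x| ≤ C)
    (hC' : ∀ᵐ x ∂volume.restrict Ω, |g' 0 x| ≤ C') (hS₀ : 0 ≤ S)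
    (hS : ∀ᵐ x ∂volume.restrict (closedBall x₀ r), |f x| ≤ S) (hφ : ContDiff ℝ (⊤ : ℕ∞) φ)
    (hφB : tsupport φ ⊆ closedBall x₀ r) (hK : ∀ j x, |pd j φ x| ≤ K) :
    |∫ x in Ω, φ x * (g 0 x * g' 1 x - g 1 x * g' 0 x)| ≤
      S * K * ((∫ x in closedBall x₀ (2 * r), |g' 0 x|) +
        ∫ x in closedBall x₀ (2 * r), |g' 1 x|) := by
  have hK₀ : 0 ≤ K := (abs_nonneg _).trans (hK 0 x₀)
  refine le_of_tendsto (h'.tendsto_integral_mul_jacobian_mollify hΩ hr hx₀ h.integrableOn_deriv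
    hC hC' hφ.continuous hφB).abs ?_
  filter_upwards [eventually_rOut_shrinkingBump_le (E := V2) hr] with k hk
  refine (h.abs_integral_mul_jacobian_le_of_contDiff (isCompact_closedBall x₀ r)
    ((closedBall_subset_closedBall (by linarith)).trans hx₀) hS hφ hφB hK
    (contDiff_mollify _ h'.integrableOn.locallyIntegrable)).trans ?_
  gcongr <;> exact h'.integral_abs_pd_mollify_le _ (by linarith) hx₀ _

lemma abs_integral_mul_deriv_sub_le (h : HasScalarBVDerivOn Ω f g σ s)
    (h' : HasScalarBVDerivOn Ω f' g' 0 0) {B : Set V2} {K : ℝ} (hB : IsCompact B) (hBΩ : B ⊆ Ω)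
    (hφ : ContDiff ℝ (⊤ : ℕ∞) φ) (hφB : tsupport φ ⊆ B) (hφ_le : ∀ x, |φ x| ≤ 1)
    (hK : ∀ j x, |pd j φ x| ≤ K) (j : Fin 2) (l : ℝ) :
    |(∫ x in Ω, φ x * g' j x) - l * ∫ x, φ x| ≤
      K * (∫ x in Ω, |f' x - f x|) + (∫ x in B, |g j x - l|) + σ.real B := by
  have := h.isFiniteMeasure
  have hc : HasCompactSupport φ := hB.of_isClosed_subset (isClosed_tsupport φ) hφB
  have hzero (x : V2) (hx : x ∉ B) : φ x = 0 :=
    image_eq_zero_of_notMem_tsupport fun hx' ↦ hx (hφB hx')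
  have hvalues := abs_integral_mul_pd_sub_le h.integrableOn h'.integrableOn hφ hc (hK j)
  have hregular : |(∫ x in Ω, φ x * g j x) - l * ∫ x, φ x| ≤ ∫ x in B, |g j x - l| :=
    abs_integral_mul_sub_le hB hBΩ ((h.integrableOn_deriv j).mono_set hBΩ) hφ.continuous hφB
      hφ_le l
  have hsingular : |∫ x, φ x * s j x ∂σ| ≤ σ.real B := by
    rw [← setIntegral_eq_integral_of_forall_compl_eq_zero (s := B) fun x hx ↦ by
      rw [hzero x hx, zero_mul], ← Real.norm_eq_abs, ← one_mul (σ.real B)]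
    refine norm_setIntegral_le_of_norm_le_const_ae (measure_lt_top σ B)
      (ae_restrict_of_ae ((h.abs_polar_le_one j).mono fun x hx ↦ ?_))
    rw [Real.norm_eq_abs, abs_mul]
    exact mul_le_one₀ (hφ_le x) (abs_nonneg _) hx
  have hibp := h.integral_mul_pd φ hφ hc (hφB.trans hBΩ) j
  have hibp' := h'.integral_mul_pd φ hφ hc (hφB.trans hBΩ) j
  rw [integral_zero_measure, sub_zero] at hibp'
  rw [abs_le] at *
  constructor <;> linarith

end HasScalarBVDerivOn

end WeakJacobian

section Differentiation

open Metric

variable {X : Type*} [MetricSpace X] [SecondCountableTopology X] [MeasurableSpace X] [BorelSpace X]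
  [HasBesicovitchCovering X]

lemma ae_eventually_setIntegral_norm_sub_le {E : Type*} [NormedAddCommGroup E] {ν : Measure X}
    [IsLocallyFiniteMeasure ν] {f : X → E} (hf : LocallyIntegrable f ν) :
    ∀ᵐ x ∂ν, ∀ δ > 0, ∀ᶠ r in 𝓝[>] (0 : ℝ),
      ∫ y in closedBall x r, ‖f y - f x‖ ∂ν ≤ δ * ν.real (closedBall x r) := by
  filter_upwards [(Besicovitch.vitaliFamily ν).ae_tendsto_average_norm_sub hf] with x hx δ hδ
  have hball := Besicovitch.tendsto_filterAt ν x
  filter_upwards [(hx.comp hball).eventually_lt_const hδ,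
    hball.eventually ((Besicovitch.vitaliFamily ν).eventually_measure_lt_top x)] with r hr hfin
  rw [← measure_smul_setAverage _ hfin.ne, smul_eq_mul, mul_comm]
  gcongr
  exact hr.le

lemma ae_restrict_eventually_setIntegral_norm_sub_le {E : Type*} [NormedAddCommGroup E]
    {ν : Measure X} [IsLocallyFiniteMeasure ν] {f : X → E} {U : Set X} (hU : IsOpen U)
    (hf : IntegrableOn f U ν) :
    ∀ᵐ x ∂ν.restrict U, ∀ δ > 0, ∀ᶠ r in 𝓝[>] (0 : ℝ),
      ∫ y in closedBall x r, ‖f y - f x‖ ∂ν ≤ δ * ν.real (closedBall x r) := by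
  filter_upwards [ae_eventually_setIntegral_norm_sub_le (Integrable.locallyIntegrable hf),
    ae_restrict_mem hU.measurableSet] with x hx hxU δ hδ
  filter_upwards [hx δ hδ, nhdsWithin_le_nhds
    (eventually_closedBall_subset (hU.mem_nhds hxU))] with r hr hrU
  rwa [Measure.restrict_restrict_of_subset hrU, measureReal_restrict_apply measurableSet_closedBall,
    inter_eq_left.2 hrU] at hr

variable {μ ν : Measure X} [IsLocallyFiniteMeasure ν]

lemma ae_eventually_measureReal_closedBall_le_of_mutuallySingular [IsLocallyFiniteMeasure μ]
    (hμ : μ ⟂ₘ ν) :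
    ∀ᵐ x ∂ν, ∀ δ > 0, ∀ᶠ r in 𝓝[>] (0 : ℝ),
      μ.real (closedBall x r) ≤ δ * ν.real (closedBall x r) := by
  filter_upwards [(Besicovitch.vitaliFamily ν).ae_eventually_measure_zero_of_singular hμ,
    (Besicovitch.vitaliFamily ν).ae_eventually_measure_pos] with x hx hpos δ hδ
  have hball := Besicovitch.tendsto_filterAt ν x
  filter_upwards [(hx.comp hball).eventually_lt_const (ENNReal.ofReal_pos.2 hδ),
    hball.eventually hpos,
    hball.eventually ((Besicovitch.vitaliFamily ν).eventually_measure_lt_top x)] with r hr hr₀ hfin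
  refine ENNReal.toReal_le_of_le_ofReal (by positivity) ?_
  rw [ENNReal.ofReal_mul hδ.le, ofReal_measureReal hfin.ne]
  exact (ENNReal.div_le_iff hr₀.ne' hfin.ne).1 hr.le

-- One radius serves all subsets: comparing small balls inside a fixed large one needs this.
lemma ae_eventually_forall_measureReal_le [IsFiniteMeasure μ] :
    ∀ᵐ x ∂ν, ∀ δ > 0, ∀ᶠ r in 𝓝[>] (0 : ℝ), ∀ s ⊆ closedBall x r,
      μ.real s ≤ δ * ν.real (closedBall x r) + (μ.rnDeriv ν x).toReal * ν.real s := by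
  have hθ : Integrable (fun y ↦ (μ.rnDeriv ν y).toReal) ν := Measure.integrable_toReal_rnDeriv
  filter_upwards [ae_eventually_setIntegral_norm_sub_le hθ.locallyIntegrable,
    ae_eventually_measureReal_closedBall_le_of_mutuallySingular
      (μ.mutuallySingular_singularPart ν)] with x hac hsing δ hδ
  have hball := Besicovitch.tendsto_filterAt ν x
  filter_upwards [hac (δ / 2) (by positivity), hsing (δ / 2) (by positivity),
    hball.eventually ((Besicovitch.vitaliFamily ν).eventually_measure_lt_top x)]
    with r hac hsing hfin s hs
  have hconst {t : Set X} (ht : t ⊆ closedBall x r) :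
      IntegrableOn (fun _ ↦ (μ.rnDeriv ν x).toReal) t ν :=
    integrableOn_const ((measure_mono ht).trans_lt hfin).ne
  have hdensity : ∫ y in s, (μ.rnDeriv ν y).toReal ∂ν ≤
      δ / 2 * ν.real (closedBall x r) + (μ.rnDeriv ν x).toReal * ν.real s := by
    calc ∫ y in s, (μ.rnDeriv ν y).toReal ∂ν
        = (∫ y in s, ((μ.rnDeriv ν y).toReal - (μ.rnDeriv ν x).toReal) ∂ν) +
            (μ.rnDeriv ν x).toReal * ν.real s := by
          rw [integral_sub hθ.integrableOn (hconst hs), setIntegral_const, smul_eq_mul]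
          ring
      _ ≤ (∫ y in closedBall x r, ‖(μ.rnDeriv ν y).toReal - (μ.rnDeriv ν x).toReal‖ ∂ν) +
            (μ.rnDeriv ν x).toReal * ν.real s := by
          gcongr
          refine (Real.le_norm_self _).trans ((norm_integral_le_integral_norm _).trans
            (setIntegral_mono_set (hθ.integrableOn.sub (hconst Subset.rfl)).norm
              (ae_of_all _ fun _ ↦ norm_nonneg _) hs.eventuallyLE))
      _ ≤ _ := by gcongr
  have hsing' : (μ.singularPart ν).real s ≤ δ / 2 * ν.real (closedBall x r) :=
    (measureReal_mono hs).trans hsing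
  have hdecomp : μ.real s =
      (μ.singularPart ν).real s + ∫ y in s, (μ.rnDeriv ν y).toReal ∂ν := by
    rw [Measure.setIntegral_toReal_rnDeriv_eq_withDensity, ← measureReal_add_apply,
      ← Measure.haveLebesgueDecomposition_add]
  linarith

end Differentiation

section WeakLimits

open Metric

variable {X : Type*} [MetricSpace X] [MeasurableSpace X]

lemma exists_tendsto_finiteMeasure_of_isCompact [BorelSpace X] {ι : Type*} (l : Ultrafilter ι)
    {m : ι → FiniteMeasure X} {M : NNReal} {K : Set X} (hK : IsCompact K)
    (hM : ∀ n, (m n).mass ≤ M) (hm : ∀ n, m n Kᶜ = 0) :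
    ∃ μ : FiniteMeasure X, Tendsto m l (𝓝 μ) := by
  obtain ⟨μ, -, hμ⟩ := (isCompact_setOfPred_finiteMeasure_le_of_isCompact M hK).ultrafilter_le_nhds
    (l.map m) (le_principal_iff.2 (mem_map.2 (univ_mem' fun n ↦ ⟨hM n, hm n⟩)))
  exact ⟨μ, hμ⟩

lemma eventually_forall_measureReal_closedBall_le_of_tendsto [OpensMeasurableSpace X] {ι : Type*}
    {l : Filter ι} {m : ι → FiniteMeasure X} {μ : FiniteMeasure X} (hm : Tendsto m l (𝓝 μ))
    {K : Set X} (hK : IsCompact K) {η η' δ : ℝ} (hη : η < η') (hδ : 0 < δ) :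
    ∀ᶠ n in l, ∀ x ∈ K, (m n : Measure X).real (closedBall x η) ≤
      (μ : Measure X).real (closedBall x η') + δ := by
  obtain ⟨t, -, ht, hcover⟩ := hK.finite_cover_balls (half_pos (sub_pos.2 hη))
  have hnet : ∀ᶠ n in l, ∀ z ∈ t, (m n : Measure X) (closedBall z ((η + η') / 2)) <
      (μ : Measure X) (closedBall z ((η + η') / 2)) + ENNReal.ofReal δ :=
    ht.eventually_all.2 fun z _ ↦ eventually_lt_of_limsup_lt
      ((FiniteMeasure.limsup_measure_closed_le_of_tendsto hm isClosed_closedBall).trans_lt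
        (ENNReal.lt_add_right (measure_ne_top _ _) (ENNReal.ofReal_pos.2 hδ).ne'))
  filter_upwards [hnet] with n hn x hx
  obtain ⟨z, hz, hxz⟩ := mem_iUnion₂.1 (hcover hx)
  rw [mem_ball] at hxz
  refine ENNReal.toReal_le_of_le_ofReal (by positivity) ?_
  rw [ENNReal.ofReal_add (by positivity) hδ.le, ofReal_measureReal]
  calc (m n : Measure X) (closedBall x η)
      ≤ (m n : Measure X) (closedBall z ((η + η') / 2)) :=
        measure_mono (closedBall_subset_closedBall' (by linarith))
    _ ≤ (μ : Measure X) (closedBall z ((η + η') / 2)) + ENNReal.ofReal δ := (hn z hz).le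
    _ ≤ (μ : Measure X) (closedBall x η') + ENNReal.ofReal δ := by
        gcongr
        exact closedBall_subset_closedBall' (by rw [dist_comm]; linarith)

lemma exists_finiteMeasure_eventually_setIntegral_le [ProperSpace X] [BorelSpace X] {ν : Measure X}
    {Ω : Set X} (hΩ : Bornology.IsBounded Ω) {ι : Type*} (l : Ultrafilter ι) {D : ι → X → ℝ}
    (hD : ∀ n, IntegrableOn (D n) Ω ν) (hD₀ : ∀ n, 0 ≤ D n) {C : ℝ}
    (hC : ∀ n, ∫ x in Ω, D n x ∂ν ≤ C) :
    ∃ μ : Measure X, IsFiniteMeasure μ ∧ ∀ K, IsCompact K → ∀ η η' δ : ℝ, η < η' → 0 < δ →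
      ∀ᶠ n in l, ∀ x ∈ K, closedBall x η ⊆ Ω →
        ∫ y in closedBall x η, D n y ∂ν ≤ μ.real (closedBall x η') + δ := by
  let m (n : ι) : Measure X := (ν.restrict Ω).withDensity fun x ↦ ENNReal.ofReal (D n x)
  have hm_univ (n : ι) : m n univ = ENNReal.ofReal (∫ x in Ω, D n x ∂ν) := by
    rw [withDensity_apply _ .univ, Measure.restrict_univ,
      ofReal_integral_eq_lintegral_ofReal (hD n) (ae_of_all _ (hD₀ n))]
  let mf (n : ι) : FiniteMeasure X := ⟨m n, ⟨by rw [hm_univ]; exact ENNReal.ofReal_lt_top⟩⟩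
  have hmass (n : ι) : (mf n).mass ≤ C.toNNReal := by
    rw [← ENNReal.coe_le_coe, FiniteMeasure.ennreal_mass]
    exact (hm_univ n).trans_le (ENNReal.ofReal_le_ofReal (hC n))
  have hconc (n : ι) : mf n (closure Ω)ᶜ = 0 := by
    have hzero : ν.restrict Ω (closure Ω)ᶜ = 0 := by
      rw [Measure.restrict_apply isClosed_closure.isOpen_compl.measurableSet,
        disjoint_iff_inter_eq_empty.1 (disjoint_compl_left_iff_subset.2 subset_closure),
        measure_empty]
    rw [← ENNReal.coe_eq_zero, FiniteMeasure.ennreal_coeFn_eq_coeFn_toMeasure]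
    exact withDensity_absolutelyContinuous _ _ hzero
  obtain ⟨μ, hμ⟩ := exists_tendsto_finiteMeasure_of_isCompact l hΩ.isCompact_closure hmass hconc
  refine ⟨μ, inferInstance, fun K hK η η' δ hη hδ ↦ ?_⟩
  filter_upwards [eventually_forall_measureReal_closedBall_le_of_tendsto hμ hK hη hδ]
    with n hn x hx hball
  refine (le_of_eq ?_).trans (hn x hx)
  change _ = (m n (closedBall x η)).toReal
  rw [withDensity_apply _ measurableSet_closedBall,
    Measure.restrict_restrict measurableSet_closedBall, inter_eq_left.2 hball,
    integral_eq_lintegral_of_nonneg_ae (ae_of_all _ (hD₀ n))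
      ((hD n).mono_set hball).aestronglyMeasurable]

end WeakLimits

section Components

variable {Ω : Set V2} {u v : V2 → V2} {g gu gs : V2 → Mat2} {σ : Measure V2}

lemma vnorm_eq_norm (v : V2) : vnorm v = ‖vToE v‖ := by
  simp [vnorm, vToE, EuclideanSpace.norm_eq]

lemma mnorm_eq_norm (M : Mat2) : mnorm M = ‖mToE M‖ := by
  simp [mnorm, mToE, EuclideanSpace.norm_eq, Fintype.sum_prod_type]

lemma vnorm_nonneg (v : V2) : 0 ≤ vnorm v := Real.sqrt_nonneg _

lemma mnorm_nonneg (M : Mat2) : 0 ≤ mnorm M := Real.sqrt_nonneg _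

lemma abs_apply_le_vnorm (v : V2) (i : Fin 2) : |v i| ≤ vnorm v :=
  (PiLp.norm_apply_le (vToE v) i).trans_eq (vnorm_eq_norm v).symm

lemma abs_apply_le_mnorm (M : Mat2) (i j : Fin 2) : |M i j| ≤ mnorm M :=
  (PiLp.norm_apply_le (mToE M) (i, j)).trans_eq (mnorm_eq_norm M).symm

lemma mulVec_e1 (M : Mat2) (i : Fin 2) : M.mulVec e1 i = M i 0 := by
  simp [Matrix.mulVec, dotProduct, e1]

lemma integrableOn_vnorm (hu : IntegrableOn u Ω) : IntegrableOn (fun x ↦ vnorm (u x)) Ω := by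
  simp only [vnorm_eq_norm]
  exact (Integrable.of_eval_piLp fun i ↦ hu.eval i).norm

lemma IntegrableOnM.integrableOn_mnorm (hg : IntegrableOnM g Ω) :
    IntegrableOn (fun x ↦ mnorm (g x)) Ω := by
  simp only [mnorm_eq_norm]
  exact (Integrable.of_eval_piLp (f := fun x ↦ mToE (g x)) fun p ↦ hg p.1 p.2).norm

lemma setIntegral_abs_le_setIntegral_mnorm (hg : IntegrableOnM g Ω) (i j : Fin 2) :
    ∫ x in Ω, |g x i j| ≤ ∫ x in Ω, mnorm (g x) :=
  integral_mono (hg i j).abs hg.integrableOn_mnorm fun x ↦ abs_apply_le_mnorm (g x) i j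

lemma setIntegral_abs_sub_le_setIntegral_vnorm_sub (hu : IntegrableOn u Ω)
    (hv : IntegrableOn v Ω) (i : Fin 2) :
    ∫ x in Ω, |u x i - v x i| ≤ ∫ x in Ω, vnorm (u x - v x) :=
  integral_mono ((hu.eval i).sub (hv.eval i)).abs (integrableOn_vnorm (hu.sub hv))
    fun x ↦ abs_apply_le_vnorm (u x - v x) i

lemma IntegrableOnM.mono (hg : IntegrableOnM g Ω) {Ω' : Set V2} (hΩ' : Ω' ⊆ Ω) :
    IntegrableOnM g Ω' :=
  fun i j ↦ (hg i j).mono_set hΩ'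

lemma IsSobolev11On.hasScalarBVDerivOn (h : IsSobolev11On Ω u gu) (i : Fin 2) :
    HasScalarBVDerivOn Ω (fun x ↦ u x i) (fun j x ↦ gu x i j) 0 0 where
  integrableOn := h.int_u.eval i
  integrableOn_deriv := h.int_gu i
  isFiniteMeasure := inferInstance
  aemeasurable_polar _ := aemeasurable_zero_measure
  abs_polar_le_one _ := by simp
  integral_mul_pd φ hφ hc hs j := by
    rw [h.ibp φ hφ hc hs i j, integral_zero_measure, sub_zero]

lemma HasBVDerivOn.hasScalarBVDerivOn (h : HasBVDerivOn Ω u gu σ gs) (i : Fin 2) :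
    HasScalarBVDerivOn Ω (fun x ↦ u x i) (fun j x ↦ gu x i j) σ (fun j x ↦ gs x i j) where
  integrableOn := h.int_u.eval i
  integrableOn_deriv := h.int_gu i
  isFiniteMeasure := ⟨h.fin.lt_top⟩
  aemeasurable_polar := h.meas_gs i
  abs_polar_le_one j := h.unit.mono fun x hx ↦ hx ▸ abs_apply_le_mnorm (gs x) i j
  integral_mul_pd φ hφ hc hs j := h.ibp φ hφ hc hs i j

end Components

section BlowUp

open Metric

lemma measureReal_closedBall_V2 (x : V2) {r : ℝ} (hr : 0 ≤ r) :
    volume.real (closedBall x r) = (2 * r) ^ 2 := by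
  rw [Measure.real, volume_closedBall_V2 x hr, ENNReal.toReal_pow,
    ENNReal.toReal_ofReal (by positivity)]

lemma sq_le_integral_halfBump (x : V2) {r : ℝ} (hr : 0 < r) : r ^ 2 ≤ ∫ y, halfBump x hr y := by
  have hvol : volume.real (closedBall x (r / 2)) = r ^ 2 := by
    rw [measureReal_closedBall_V2 x (half_pos hr).le, mul_div_cancel₀ r two_ne_zero]
  exact hvol.symm.trans_le ((halfBump x hr).measure_closedBall_le_integral volume)

lemma abs_one_sub_mul_integral_le {Ω : Set V2} {g g' : Fin 2 → V2 → ℝ}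
    (hg' : ∀ j, IntegrableOn (g' j) Ω)
    (hdet : ∀ᵐ x ∂volume.restrict Ω, g 0 x * g' 1 x - g 1 x * g' 0 x = 1) {φ : V2 → ℝ}
    (hφ : Continuous φ) (hc : HasCompactSupport φ) (hφΩ : tsupport φ ⊆ Ω) (L L' : V2) :
    |(1 - (L 0 * L' 1 - L 1 * L' 0)) * ∫ x, φ x| ≤
      |∫ x in Ω, φ x * ((g 0 x - L 0) * g' 1 x - (g 1 x - L 1) * g' 0 x)| +
        |L 0| * |(∫ x in Ω, φ x * g' 1 x) - L' 1 * ∫ x, φ x| +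
          |L 1| * |(∫ x in Ω, φ x * g' 0 x) - L' 0 * ∫ x, φ x| := by
  have hint (j : Fin 2) : IntegrableOn (fun x ↦ φ x * g' j x) Ω :=
    integrableOn_mul_of_hasCompactSupport (hg' j) hφ hc
  have hjac : ∫ x in Ω, φ x * ((g 0 x - L 0) * g' 1 x - (g 1 x - L 1) * g' 0 x) =
      (∫ x, φ x) - (L 0 * (∫ x in Ω, φ x * g' 1 x) - L 1 * ∫ x in Ω, φ x * g' 0 x) := by
    have hlin : IntegrableOn (fun x ↦ L 0 * (φ x * g' 1 x) - L 1 * (φ x * g' 0 x)) Ω :=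
      ((hint 1).const_mul _).sub ((hint 0).const_mul _)
    rw [← setIntegral_eq_integral_of_forall_compl_eq_zero fun x hx ↦
        image_eq_zero_of_notMem_tsupport fun hxs ↦ hx (hφΩ hxs), ← integral_const_mul,
      ← integral_const_mul, ← integral_sub ((hint 1).const_mul _) ((hint 0).const_mul _),
      ← integral_sub (hφ.integrable_of_hasCompactSupport hc).integrableOn hlin]
    refine integral_congr_ae (hdet.mono fun x hx ↦ ?_)
    linear_combination φ x * hx
  rw [← abs_mul, ← abs_mul, hjac]
  refine (le_of_eq (congrArg abs ?_)).trans ((abs_sub _ _).trans (add_le_add_left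
    (abs_add_le _ _) _))
  ring

namespace HasScalarBVDerivOn

variable {Ω : Set V2} {f f' : V2 → ℝ} {g g' s : Fin 2 → V2 → ℝ} {σ : Measure V2} {x₀ L : V2}
  {r η A C N T K c : ℝ}

lemma sub_affine (h : HasScalarBVDerivOn Ω f g σ s) (hb : Bornology.IsBounded Ω) (c : ℝ) (L : V2) :
    HasScalarBVDerivOn Ω (fun x ↦ f x - (c + L ⬝ᵥ x)) (fun j x ↦ g j x - L j) σ s := by
  have hsub := h.sub_contDiff hb (F := fun x ↦ c + L ⬝ᵥ x) (by unfold dotProduct; fun_prop)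
  simpa only [pd_const_add_dotProduct] using hsub

lemma exists_integral_abs_sub_affine_le (h : HasScalarBVDerivOn Ω f g σ s) (hΩ : MeasurableSet Ω)
    (hb : Bornology.IsBounded Ω) (hr : 0 < r) (hx₀ : closedBall x₀ (2 * r) ⊆ Ω) (L : V2) :
    ∃ c, ∫ x in closedBall x₀ r, |f x - (c + L ⬝ᵥ x)| ≤
      2 * r * ((∫ x in closedBall x₀ (2 * r), |g 0 x - L 0|) +
        (∫ x in closedBall x₀ (2 * r), |g 1 x - L 1|) + 2 * σ.real (closedBall x₀ (2 * r))) := by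
  obtain ⟨c, hc⟩ := (h.sub_affine hb 0 L).exists_integral_abs_sub_le hΩ hr hx₀
  simp only [zero_add, sub_sub, add_comm _ c] at hc
  exact ⟨c, hc⟩

lemma ae_abs_le_of_integral_le (h : HasScalarBVDerivOn Ω f g 0 0) (hΩ : MeasurableSet Ω)
    (hη : 0 < η) (hηr : 2 * η ≤ r) (hx₀ : closedBall x₀ (2 * r) ⊆ Ω) (hC₀ : 0 ≤ C)
    (hC : ∀ᵐ x ∂volume.restrict Ω, |g 0 x| ≤ C)
    (hA : ∫ x in closedBall x₀ (2 * r), |f x| ≤ A * η ^ 3)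
    (hN : ∀ x ∈ closedBall x₀ r, ∫ p in closedBall x (2 * η), |g 1 p| ≤ N * η ^ 2) :
    ∀ᵐ x ∂volume.restrict (closedBall x₀ r), |f x| ≤ (2 * C + A / 4 + N / 2) * η := by
  have hsub : closedBall x₀ r ⊆ Ω := (closedBall_subset_closedBall (by linarith)).trans hx₀
  filter_upwards [ae_restrict_of_ae_restrict_of_subset hsub (h.ae_mul_abs_le hΩ hη hC₀ hC),
    ae_restrict_mem measurableSet_closedBall] with x hfx hx
  have hball : closedBall x (2 * η) ⊆ closedBall x₀ (2 * r) :=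
    closedBall_subset_closedBall' (by linarith [mem_closedBall.1 hx])
  have hA' : ∫ p in closedBall x (2 * η), |f p| ≤ A * η ^ 3 :=
    (setIntegral_mono_set (h.integrableOn.mono_set hx₀).abs (ae_of_all _ fun _ ↦ abs_nonneg _)
      hball.eventuallyLE).trans hA
  refine le_of_mul_le_mul_left (a := (2 * η) ^ 2) ?_ (by positivity)
  calc (2 * η) ^ 2 * |f x|
      ≤ (2 * η) ^ 3 * C + A * η ^ 3 + 2 * η * (N * η ^ 2) := by
        refine (hfx (hball.trans hx₀)).trans ?_
        gcongr
        exact hN x hx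
    _ = (2 * η) ^ 2 * ((2 * C + A / 4 + N / 2) * η) := by ring

lemma integral_abs_deriv_sub_const_le (h : HasScalarBVDerivOn Ω f g σ s) {x : V2} (hη : 0 ≤ η)
    (hx : closedBall x (2 * η) ⊆ Ω) (j : Fin 2) (l : ℝ)
    (hN : ∫ p in closedBall x (2 * η), |g j p| ≤ N * η ^ 2) :
    ∫ p in closedBall x (2 * η), |g j p - l| ≤ (N + 16 * |l|) * η ^ 2 := by
  have hint := (h.integrableOn_deriv j).mono_set hx
  have hconst : IntegrableOn (fun _ : V2 ↦ |l|) (closedBall x (2 * η)) :=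
    integrableOn_const (isCompact_closedBall x (2 * η)).measure_lt_top.ne
  have hvol := measureReal_closedBall_V2 x (r := 2 * η) (by positivity)
  calc ∫ p in closedBall x (2 * η), |g j p - l|
      ≤ ∫ p in closedBall x (2 * η), (|g j p| + |l|) :=
        integral_mono_of_nonneg (ae_of_all _ fun _ ↦ abs_nonneg _) (hint.abs.add hconst)
          (ae_of_all _ fun _ ↦ abs_sub _ _)
    _ = (∫ p in closedBall x (2 * η), |g j p|) + (2 * (2 * η)) ^ 2 * |l| := by
        rw [integral_add hint.abs hconst, setIntegral_const, hvol, smul_eq_mul]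
    _ ≤ (N + 16 * |l|) * η ^ 2 := by linarith

lemma abs_integral_halfBump_mul_jacobian_sub_le (h : HasScalarBVDerivOn Ω f g 0 0)
    (h' : HasScalarBVDerivOn Ω f' g' 0 0) (hΩ : MeasurableSet Ω) (hb : Bornology.IsBounded Ω)
    (hr : 0 < r) (hη : 0 < η) (hηr : 2 * η ≤ r) (hx₀ : closedBall x₀ (2 * r) ⊆ Ω)
    (hA₀ : 0 ≤ A) (hC₀ : 0 ≤ C) (hN₀ : 0 ≤ N)
    (hC : ∀ᵐ x ∂volume.restrict Ω, |g 0 x| ≤ C) (hC' : ∀ᵐ x ∂volume.restrict Ω, |g' 0 x| ≤ C)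
    (hA : ∫ x in closedBall x₀ (2 * r), |f x - (c + L ⬝ᵥ x)| ≤ A * η ^ 3)
    (hN : ∀ x ∈ closedBall x₀ r, ∫ p in closedBall x (2 * η), |g 1 p| ≤ N * η ^ 2)
    (hT : ∀ j, ∫ x in closedBall x₀ (2 * r), |g' j x| ≤ T * r ^ 2)
    (hK : ∀ j x, |pd j (halfBump x₀ hr) x| ≤ K / r) :
    |∫ x in Ω, halfBump x₀ hr x * ((g 0 x - L 0) * g' 1 x - (g 1 x - L 1) * g' 0 x)| ≤
      2 * (2 * (C + |L 0|) + A / 4 + (N + 16 * |L 1|) / 2) * K * T * η * r := by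
  have hK₀ : 0 ≤ K / r := (abs_nonneg _).trans (hK 0 x₀)
  have hw := h.sub_affine hb c L
  have hCw : ∀ᵐ x ∂volume.restrict Ω, |g 0 x - L 0| ≤ C + |L 0| :=
    hC.mono fun x hx ↦ (abs_sub _ _).trans (by gcongr)
  have hsup := hw.ae_abs_le_of_integral_le hΩ hη hηr hx₀ (by positivity) hCw hA fun x hx ↦
    h.integral_abs_deriv_sub_const_le hη.le ((closedBall_subset_closedBall'
      (by linarith [mem_closedBall.1 hx])).trans hx₀) 1 (L 1) (hN x hx)
  calc _ ≤ (2 * (C + |L 0|) + A / 4 + (N + 16 * |L 1|) / 2) * η * (K / r) *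
        ((∫ x in closedBall x₀ (2 * r), |g' 0 x|) + ∫ x in closedBall x₀ (2 * r), |g' 1 x|) :=
        hw.abs_integral_mul_jacobian_le h' hΩ hr hx₀ hCw hC' (by positivity) hsup
          (halfBump x₀ hr).contDiff (halfBump x₀ hr).tsupport_eq.le hK
    _ ≤ (2 * (C + |L 0|) + A / 4 + (N + 16 * |L 1|) / 2) * η * (K / r) *
        (T * r ^ 2 + T * r ^ 2) := by
        gcongr <;> exact hT _
    _ = _ := by
        field_simp
        ring

end HasScalarBVDerivOn

end BlowUp

section BlowUpDet

open Metric

variable {Ω : Set V2} {u v : V2 → V2} {gu gv gs : V2 → Mat2}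
  {σ : Measure V2} {x₀ : V2} {L : Mat2} {r ε C Θ K : ℝ}

lemma exists_integral_abs_sub_affine_le_of_close
    (hv : ∀ i, HasScalarBVDerivOn Ω (fun x ↦ v x i) (fun j x ↦ gv x i j) 0 0)
    (hu : ∀ i, HasScalarBVDerivOn Ω (fun x ↦ u x i) (fun j x ↦ gu x i j) σ (fun j x ↦ gs x i j))
    (hΩ : MeasurableSet Ω) (hb : Bornology.IsBounded Ω) (hr : 0 < r)
    (hx₀ : closedBall x₀ (4 * r) ⊆ Ω)
    (hgu : ∀ i j, ∫ x in closedBall x₀ (4 * r), |gu x i j - L i j| ≤ ε ^ 3 * r ^ 2)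
    (hσ : σ.real (closedBall x₀ (4 * r)) ≤ ε ^ 3 * r ^ 2)
    (hvu : ∀ i, ∫ x in Ω, |v x i - u x i| ≤ (ε * r) ^ 3) (i : Fin 2) :
    ∃ c, ∫ x in closedBall x₀ (2 * r), |v x i - (c + L i ⬝ᵥ x)| ≤ 17 * (ε * r) ^ 3 := by
  have h4 : 2 * (2 * r) = 4 * r := by ring
  have hsub : closedBall x₀ (2 * r) ⊆ Ω := (closedBall_subset_closedBall (by linarith)).trans hx₀
  obtain ⟨c, hc⟩ := (hu i).exists_integral_abs_sub_affine_le hΩ hb (r := 2 * r) (by positivity)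
    (h4 ▸ hx₀) (L i)
  rw [h4] at hc
  have hdiff : IntegrableOn (fun x ↦ v x i - u x i) Ω :=
    (hv i).integrableOn.sub (hu i).integrableOn
  have hudiff := ((hu i).sub_affine hb c (L i)).integrableOn.mono_set hsub
  refine ⟨c, ?_⟩
  calc ∫ x in closedBall x₀ (2 * r), |v x i - (c + L i ⬝ᵥ x)|
      ≤ ∫ x in closedBall x₀ (2 * r), (|v x i - u x i| + |u x i - (c + L i ⬝ᵥ x)|) :=
        integral_mono_of_nonneg (ae_of_all _ fun _ ↦ abs_nonneg _)
          ((hdiff.mono_set hsub).abs.add hudiff.abs) (ae_of_all _ fun _ ↦ abs_sub_le _ _ _)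
    _ = (∫ x in closedBall x₀ (2 * r), |v x i - u x i|) +
          ∫ x in closedBall x₀ (2 * r), |u x i - (c + L i ⬝ᵥ x)| :=
        integral_add (hdiff.mono_set hsub).abs hudiff.abs
    _ ≤ (ε * r) ^ 3 + 4 * r * (ε ^ 3 * r ^ 2 + ε ^ 3 * r ^ 2 + 2 * (ε ^ 3 * r ^ 2)) := by
        refine add_le_add ((setIntegral_mono_set hdiff.abs (ae_of_all _ fun _ ↦ abs_nonneg _)
          hsub.eventuallyLE).trans (hvu i)) (hc.trans ?_)
        gcongr
        exacts [hgu i 0, hgu i 1]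
    _ = 17 * (ε * r) ^ 3 := by ring

lemma abs_integral_halfBump_mul_deriv_sub_le
    (hv : ∀ i, HasScalarBVDerivOn Ω (fun x ↦ v x i) (fun j x ↦ gv x i j) 0 0)
    (hu : ∀ i, HasScalarBVDerivOn Ω (fun x ↦ u x i) (fun j x ↦ gu x i j) σ (fun j x ↦ gs x i j))
    (hb : Bornology.IsBounded Ω) (hr : 0 < r) (hx₀ : closedBall x₀ (4 * r) ⊆ Ω)
    (hgu : ∀ i j, ∫ x in closedBall x₀ (4 * r), |gu x i j - L i j| ≤ ε ^ 3 * r ^ 2)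
    (hσ : σ.real (closedBall x₀ (4 * r)) ≤ ε ^ 3 * r ^ 2)
    (hvu : ∀ i, ∫ x in Ω, |v x i - u x i| ≤ (ε * r) ^ 3)
    (hK : ∀ j x, |pd j (halfBump x₀ hr) x| ≤ K / r) (i j : Fin 2) :
    |(∫ x in Ω, halfBump x₀ hr x * gv x i j) - L i j * ∫ x, halfBump x₀ hr x| ≤
      ε ^ 3 * (K + 2) * r ^ 2 := by
  have := (hu i).isFiniteMeasure
  set φ := halfBump x₀ hr
  have hsub : closedBall x₀ r ⊆ closedBall x₀ (4 * r) := closedBall_subset_closedBall (by linarith)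
  have hK₀ : 0 ≤ K / r := (abs_nonneg _).trans (hK 0 x₀)
  calc |(∫ x in Ω, φ x * gv x i j) - L i j * ∫ x, φ x|
      ≤ K / r * (∫ x in Ω, |v x i - u x i|) +
          (∫ x in closedBall x₀ r, |gu x i j - L i j|) + σ.real (closedBall x₀ r) :=
        (hu i).abs_integral_mul_deriv_sub_le (hv i) (isCompact_closedBall x₀ r)
          (hsub.trans hx₀) φ.contDiff φ.tsupport_eq.le
          (fun x ↦ (abs_of_nonneg φ.nonneg).trans_le φ.le_one) hK j (L i j)
    _ ≤ K / r * (ε * r) ^ 3 + ε ^ 3 * r ^ 2 + ε ^ 3 * r ^ 2 := by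
        gcongr
        · exact hvu i
        · refine (setIntegral_mono_set ?_ (ae_of_all _ fun _ ↦ abs_nonneg _)
            hsub.eventuallyLE).trans (hgu i j)
          exact ((((hu i).sub_affine hb 0 (L i)).integrableOn_deriv j).mono_set hx₀).abs
        · exact (measureReal_mono hsub).trans hσ
    _ = ε ^ 3 * (K / r * r + 2) * r ^ 2 := by ring
    _ = ε ^ 3 * (K + 2) * r ^ 2 := by rw [div_mul_cancel₀ K hr.ne']

/-- The bound, per unit of `ε`, on the defect `|1 - det L|` at a blow-up point with approximate
differential `L`, for `‖∂₁v‖_∞ ≤ C`, gradients of mass at most `Θ ρ²` on balls of radius `2ρ` and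
cutoffs whose derivatives are bounded by `K / r`. -/
def jacobianDefectBound (C Θ K : ℝ) (L : Mat2) : ℝ :=
  2 * (2 * (C + |L 0 0|) + 17 / 4 + (Θ + 16 * |L 0 1|) / 2) * K * Θ +
    (|L 0 0| + |L 0 1|) * (K + 2)

lemma abs_one_sub_det_le
    (hv : ∀ i, HasScalarBVDerivOn Ω (fun x ↦ v x i) (fun j x ↦ gv x i j) 0 0)
    (hu : ∀ i, HasScalarBVDerivOn Ω (fun x ↦ u x i) (fun j x ↦ gu x i j) σ (fun j x ↦ gs x i j))
    (hΩ : MeasurableSet Ω) (hb : Bornology.IsBounded Ω)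
    (hdet : ∀ᵐ x ∂volume.restrict Ω, (gv x).det = 1) (hC₀ : 0 ≤ C)
    (hC : ∀ i, ∀ᵐ x ∂volume.restrict Ω, |gv x i 0| ≤ C)
    (hr : 0 < r) (hε : 0 < ε) (hε_le : ε ≤ 1 / 2) (hx₀ : closedBall x₀ (4 * r) ⊆ Ω)
    (hgu : ∀ i j, ∫ x in closedBall x₀ (4 * r), |gu x i j - L i j| ≤ ε ^ 3 * r ^ 2)
    (hσ : σ.real (closedBall x₀ (4 * r)) ≤ ε ^ 3 * r ^ 2)
    (hvu : ∀ i, ∫ x in Ω, |v x i - u x i| ≤ (ε * r) ^ 3) (hΘ₀ : 0 ≤ Θ)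
    (hΘε : ∀ x ∈ closedBall x₀ r,
      ∫ p in closedBall x (2 * (ε * r)), |gv p 0 1| ≤ Θ * (ε * r) ^ 2)
    (hΘ : ∀ j, ∫ x in closedBall x₀ (2 * r), |gv x 1 j| ≤ Θ * r ^ 2)
    (hK : ∀ j x, |pd j (halfBump x₀ hr) x| ≤ K / r) :
    |1 - L.det| ≤ ε * jacobianDefectBound C Θ K L := by
  set φ := halfBump x₀ hr
  have hsub : closedBall x₀ r ⊆ closedBall x₀ (4 * r) := closedBall_subset_closedBall (by linarith)
  have hsupp : tsupport φ ⊆ closedBall x₀ r := φ.tsupport_eq.le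
  have hK₀ : 0 ≤ K := by
    simpa only [zero_mul] using (le_div_iff₀ hr).1 ((abs_nonneg _).trans (hK 0 x₀))
  obtain ⟨c, hc⟩ := exists_integral_abs_sub_affine_le_of_close hv hu hΩ hb hr hx₀ hgu hσ hvu 0
  have hjac := (hv 0).abs_integral_halfBump_mul_jacobian_sub_le (hv 1) hΩ hb hr
    (mul_pos hε hr) (by nlinarith) ((closedBall_subset_closedBall (by linarith)).trans hx₀)
    (by norm_num) hC₀ hΘ₀ (hC 0) (hC 1) hc hΘε hΘ hK
  have hlin (j : Fin 2) :
      |(∫ x in Ω, φ x * gv x 1 j) - L 1 j * ∫ x, φ x| ≤ ε * (K + 2) * r ^ 2 :=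
    (abs_integral_halfBump_mul_deriv_sub_le hv hu hb hr hx₀ hgu hσ hvu hK 1 j).trans
      (by gcongr; exact pow_le_of_le_one hε.le (by linarith) three_ne_zero)
  have hdefect := abs_one_sub_mul_integral_le (g := fun j x ↦ gv x 0 j)
    (g' := fun j x ↦ gv x 1 j) (hv 1).integrableOn_deriv
    (hdet.mono fun x hx ↦ (Matrix.det_fin_two (gv x)).symm.trans hx) φ.continuous
    φ.hasCompactSupport (hsupp.trans (hsub.trans hx₀)) (L 0) (L 1)
  rw [← Matrix.det_fin_two L, abs_mul] at hdefect
  refine le_of_mul_le_mul_right (a := r ^ 2) ?_ (by positivity)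
  calc |1 - L.det| * r ^ 2 ≤ |1 - L.det| * |∫ x, φ x| := by
        gcongr
        exact (sq_le_integral_halfBump x₀ hr).trans (le_abs_self _)
    _ ≤ 2 * (2 * (C + |L 0 0|) + 17 / 4 + (Θ + 16 * |L 0 1|) / 2) * K * Θ * (ε * r) * r +
          |L 0 0| * (ε * (K + 2) * r ^ 2) + |L 0 1| * (ε * (K + 2) * r ^ 2) :=
        hdefect.trans (by gcongr; exacts [hlin 1, hlin 0])
    _ = ε * jacobianDefectBound C Θ K L * r ^ 2 := by
        unfold jacobianDefectBound
        ring

end BlowUpDet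

section WeakContinuity

open Metric

variable {Ω : Set V2} {u : V2 → V2} {gu gs : V2 → Mat2} {un : ℕ → V2 → V2}
  {gn : ℕ → V2 → Mat2} {σ μ : Measure V2} {x₀ : V2} {L : Mat2} {r ε C C₀ K θ : ℝ}

lemma eventually_forall_setIntegral_closedBall_le {l : Filter ℕ} {D : ℕ → V2 → ℝ}
    (hD : ∀ K, IsCompact K → ∀ η η' δ : ℝ, η < η' → 0 < δ → ∀ᶠ n in l, ∀ x ∈ K,
      closedBall x η ⊆ Ω → ∫ y in closedBall x η, D n y ≤ μ.real (closedBall x η') + δ)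
    (hx₀ : closedBall x₀ (4 * r) ⊆ Ω)
    (hμ : ∀ s ⊆ closedBall x₀ (4 * r),
      μ.real s ≤ ε ^ 3 * r ^ 2 + θ * volume.real s)
    {ρ : ℝ} (hρ : 0 < ρ) (hρr : ρ ≤ r) (hερ : ε ^ 3 * r ^ 2 ≤ ρ ^ 2) :
    ∀ᶠ n in l, ∀ x ∈ closedBall x₀ r,
      ∫ y in closedBall x (2 * ρ), D n y ≤ (2 + 36 * θ) * ρ ^ 2 := by
  filter_upwards [hD _ (isCompact_closedBall x₀ r) (2 * ρ) (3 * ρ) (ρ ^ 2) (by linarith)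
    (by positivity)] with n hn x hx
  have hball : closedBall x (3 * ρ) ⊆ closedBall x₀ (4 * r) :=
    closedBall_subset_closedBall' (by linarith [mem_closedBall.1 hx])
  calc ∫ y in closedBall x (2 * ρ), D n y
      ≤ μ.real (closedBall x (3 * ρ)) + ρ ^ 2 :=
        hn x hx (((closedBall_subset_closedBall (by linarith)).trans hball).trans hx₀)
    _ ≤ (ε ^ 3 * r ^ 2 + θ * volume.real (closedBall x (3 * ρ))) + ρ ^ 2 := by
        gcongr
        exact hμ _ hball
    _ ≤ (2 + 36 * θ) * ρ ^ 2 := by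
        rw [measureReal_closedBall_V2 x (by positivity)]
        linarith

lemma exists_forall_abs_pd_halfBump_le :
    ∃ K, ∀ (c : V2) {r : ℝ} (hr : 0 < r) j x, |pd j (halfBump c hr) x| ≤ K / r := by
  obtain ⟨K, hK⟩ := exists_norm_fderiv_halfBump_le V2
  exact ⟨K, fun c r hr j x ↦ (abs_pd_le_norm_fderiv j _ x).trans (hK c hr x)⟩

/-- `u` is a componentwise `BV` limit in `L¹(Ω)` of Sobolev maps `un` with unit Jacobian, first
partial derivatives bounded by `C` and gradients `gn` of mass at most `C₀`; `gu` is the density of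
the absolutely continuous part of `Du` and `gs · σ` is its singular part. -/
structure IsUnitJacobianLimit (Ω : Set V2) (C C₀ : ℝ) (un : ℕ → V2 → V2) (gn : ℕ → V2 → Mat2)
    (u : V2 → V2) (gu : V2 → Mat2) (σ : Measure V2) (gs : V2 → Mat2) : Prop where
  sobolev : ∀ n i, HasScalarBVDerivOn Ω (fun x ↦ un n x i) (fun j x ↦ gn n x i j) 0 0
  integral_mnorm_le : ∀ n, ∫ x in Ω, mnorm (gn n x) ≤ C₀
  det_eq_one : ∀ n, ∀ᵐ x ∂volume.restrict Ω, (gn n x).det = 1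
  bound_nonneg : 0 ≤ C
  abs_le : ∀ n i, ∀ᵐ x ∂volume.restrict Ω, |gn n x i 0| ≤ C
  bv : ∀ i, HasScalarBVDerivOn Ω (fun x ↦ u x i) (fun j x ↦ gu x i j) σ (fun j x ↦ gs x i j)
  mutuallySingular : σ ⟂ₘ volume
  tendsto : ∀ i, Tendsto (fun n ↦ ∫ x in Ω, |un n x i - u x i|) atTop (𝓝 0)

namespace IsUnitJacobianLimit

lemma integrableOnM (h : IsUnitJacobianLimit Ω C C₀ un gn u gu σ gs) (n : ℕ) :
    IntegrableOnM (gn n) Ω :=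
  fun i ↦ (h.sobolev n i).integrableOn_deriv

lemma mono (h : IsUnitJacobianLimit Ω C C₀ un gn u gu σ gs) {Ω' : Set V2} (hΩ' : Ω' ⊆ Ω) :
    IsUnitJacobianLimit Ω' C C₀ un gn u gu σ gs where
  sobolev n i := (h.sobolev n i).mono hΩ'
  integral_mnorm_le n := (setIntegral_mono_set (h.integrableOnM n).integrableOn_mnorm
    (ae_of_all _ fun _ ↦ mnorm_nonneg _) hΩ'.eventuallyLE).trans (h.integral_mnorm_le n)
  det_eq_one n := ae_restrict_of_ae_restrict_of_subset hΩ' (h.det_eq_one n)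
  bound_nonneg := h.bound_nonneg
  abs_le n i := ae_restrict_of_ae_restrict_of_subset hΩ' (h.abs_le n i)
  bv i := (h.bv i).mono hΩ'
  mutuallySingular := h.mutuallySingular
  tendsto i := squeeze_zero (fun _ ↦ integral_nonneg fun _ ↦ abs_nonneg _)
    (fun n ↦ setIntegral_mono_set ((h.sobolev n i).integrableOn.sub (h.bv i).integrableOn).abs
      (ae_of_all _ fun _ ↦ abs_nonneg _) hΩ'.eventuallyLE) (h.tendsto i)

lemma abs_one_sub_det_le_of_forall_measureReal_le
    (h : IsUnitJacobianLimit Ω C C₀ un gn u gu σ gs)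
    (hΩ : MeasurableSet Ω) (hb : Bornology.IsBounded Ω) {l : Filter ℕ} [l.NeBot] (hl : l ≤ atTop)
    (hlim : ∀ K, IsCompact K → ∀ η η' δ : ℝ, η < η' → 0 < δ → ∀ᶠ n in l, ∀ x ∈ K,
      closedBall x η ⊆ Ω →
        ∫ y in closedBall x η, mnorm (gn n y) ≤ μ.real (closedBall x η') + δ)
    (hr : 0 < r) (hε : 0 < ε) (hε_le : ε ≤ 1 / 2) (hx₀ : closedBall x₀ (4 * r) ⊆ Ω)
    (hgu : ∀ i j, ∫ x in closedBall x₀ (4 * r), |gu x i j - L i j| ≤ ε ^ 3 * r ^ 2)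
    (hσ : σ.real (closedBall x₀ (4 * r)) ≤ ε ^ 3 * r ^ 2) (hθ : 0 ≤ θ)
    (hμ : ∀ s ⊆ closedBall x₀ (4 * r),
      μ.real s ≤ ε ^ 3 * r ^ 2 + θ * volume.real s)
    (hK : ∀ j x, |pd j (halfBump x₀ hr) x| ≤ K / r) :
    |1 - L.det| ≤ ε * jacobianDefectBound C (2 + 36 * θ) K L := by
  have hclose : ∀ᶠ n in l, ∀ i, ∫ x in Ω, |un n x i - u x i| ≤ (ε * r) ^ 3 :=
    eventually_all.2 fun i ↦ ((h.tendsto i).mono_left hl).eventually_le_const (by positivity)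
  have hsmall := eventually_forall_setIntegral_closedBall_le hlim hx₀ hμ (mul_pos hε hr)
    (by nlinarith)
    ((mul_le_mul_of_nonneg_right (pow_le_pow_of_le_one hε.le (by linarith) (by norm_num))
      (sq_nonneg r)).trans_eq (mul_pow ε r 2).symm)
  have hlarge := eventually_forall_setIntegral_closedBall_le hlim hx₀ hμ hr le_rfl
    (mul_le_of_le_one_left (sq_nonneg r) (pow_le_one₀ hε.le (by linarith)))
  obtain ⟨n, hn_close, hn_small, hn_large⟩ := (hclose.and (hsmall.and hlarge)).exists
  have hentry {x : V2} (hx : x ∈ closedBall x₀ r) {ρ : ℝ} (hρ : ρ ≤ r) (i j : Fin 2) :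
      ∫ y in closedBall x (2 * ρ), |gn n y i j| ≤ ∫ y in closedBall x (2 * ρ), mnorm (gn n y) :=
    setIntegral_abs_le_setIntegral_mnorm ((h.integrableOnM n).mono
      ((closedBall_subset_closedBall' (by linarith [mem_closedBall.1 hx])).trans hx₀)) i j
  have hx₀r := mem_closedBall_self (x := x₀) hr.le
  exact abs_one_sub_det_le (h.sobolev n) h.bv hΩ hb (h.det_eq_one n) h.bound_nonneg
    (h.abs_le n) hr hε hε_le hx₀ hgu hσ hn_close
    (by positivity) (fun x hx ↦ (hentry hx (by nlinarith) 0 1).trans (hn_small x hx))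
    (fun j ↦ (hentry hx₀r le_rfl 1 j).trans (hn_large x₀ hx₀r)) hK

lemma det_eq_one_of_eventually
    (h : IsUnitJacobianLimit Ω C C₀ un gn u gu σ gs)
    (hΩ : MeasurableSet Ω) (hb : Bornology.IsBounded Ω) {l : Filter ℕ} [l.NeBot] (hl : l ≤ atTop)
    (hlim : ∀ K, IsCompact K → ∀ η η' δ : ℝ, η < η' → 0 < δ → ∀ᶠ n in l, ∀ x ∈ K,
      closedBall x η ⊆ Ω →
        ∫ y in closedBall x η, mnorm (gn n y) ≤ μ.real (closedBall x η') + δ)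
    (hx₀ : Ω ∈ 𝓝 x₀)
    (hgu : ∀ i j, ∀ δ > 0, ∀ᶠ r in 𝓝[>] (0 : ℝ),
      ∫ x in closedBall x₀ r, |gu x i j - L i j| ≤ δ * volume.real (closedBall x₀ r))
    (hσ : ∀ δ > 0, ∀ᶠ r in 𝓝[>] (0 : ℝ),
      σ.real (closedBall x₀ r) ≤ δ * volume.real (closedBall x₀ r)) (hθ : 0 ≤ θ)
    (hμ : ∀ δ > 0, ∀ᶠ r in 𝓝[>] (0 : ℝ), ∀ s ⊆ closedBall x₀ r,
      μ.real s ≤ δ * volume.real (closedBall x₀ r) + θ * volume.real s) :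
    L.det = 1 := by
  obtain ⟨K, hK⟩ := exists_forall_abs_pd_halfBump_le
  have hbound {ε : ℝ} (hε : 0 < ε) (hε_le : ε ≤ 1 / 2) :
      |1 - L.det| ≤ ε * jacobianDefectBound C (2 + 36 * θ) K L := by
    have hδ : 0 < ε ^ 3 / 64 := by positivity
    obtain ⟨R, hsub, hgu, hσ, hμ, hR⟩ :=
      (((eventually_closedBall_subset hx₀).filter_mono nhdsWithin_le_nhds).and
        ((eventually_all.2 fun i ↦ eventually_all.2 fun j ↦ hgu i j _ hδ).and
          ((hσ _ hδ).and ((hμ _ hδ).and eventually_mem_nhdsWithin)))).exists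
    obtain ⟨r, rfl⟩ : ∃ r, R = 4 * r := ⟨R / 4, by ring⟩
    have hr : 0 < r := by linarith [mem_Ioi.1 hR]
    have hvol : ε ^ 3 / 64 * volume.real (closedBall x₀ (4 * r)) = ε ^ 3 * r ^ 2 := by
      rw [measureReal_closedBall_V2 x₀ (by positivity)]
      ring
    rw [hvol] at hσ
    simp only [hvol] at hgu hμ
    exact h.abs_one_sub_det_le_of_forall_measureReal_le hΩ hb hl hlim hr hε hε_le hsub
      hgu hσ hθ hμ (hK x₀ hr)
  have hlim₀ : Tendsto (fun ε ↦ ε * jacobianDefectBound C (2 + 36 * θ) K L) (𝓝[>] 0) (𝓝 0) :=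
    tendsto_nhdsWithin_of_tendsto_nhds <|
      (continuous_id.mul continuous_const).tendsto' _ _ (zero_mul _)
  have hle : |1 - L.det| ≤ 0 := ge_of_tendsto hlim₀ <| by
    filter_upwards [Ioo_mem_nhdsGT (half_pos one_pos)] with ε hε using hbound hε.1 hε.2.le
  exact (sub_eq_zero.1 (abs_nonpos_iff.1 hle)).symm

lemma ae_det_eq_one_of_isBounded (h : IsUnitJacobianLimit Ω C C₀ un gn u gu σ gs)
    (hΩ : IsOpen Ω) (hb : Bornology.IsBounded Ω) :
    ∀ᵐ x ∂volume.restrict Ω, (gu x).det = 1 := by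
  have := (h.bv 0).isFiniteMeasure
  obtain ⟨μ, _, hlim⟩ := exists_finiteMeasure_eventually_setIntegral_le hb (hyperfilter ℕ)
    (fun n ↦ (h.integrableOnM n).integrableOn_mnorm) (fun n x ↦ mnorm_nonneg _)
    h.integral_mnorm_le
  have hgu : ∀ᵐ x ∂volume.restrict Ω, ∀ i j, ∀ δ > 0, ∀ᶠ r in 𝓝[>] (0 : ℝ),
      ∫ y in closedBall x r, |gu y i j - gu x i j| ≤ δ * volume.real (closedBall x r) :=
    ae_all_iff.2 fun i ↦ ae_all_iff.2 fun j ↦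
      ae_restrict_eventually_setIntegral_norm_sub_le hΩ ((h.bv i).integrableOn_deriv j)
  filter_upwards [hgu,
    ae_restrict_of_ae (ae_eventually_measureReal_closedBall_le_of_mutuallySingular
      h.mutuallySingular),
    ae_restrict_of_ae (ae_eventually_forall_measureReal_le (μ := μ)),
    ae_restrict_mem hΩ.measurableSet] with x hgu hσ hμ hx
  exact h.det_eq_one_of_eventually hΩ.measurableSet hb
    Nat.hyperfilter_le_atTop hlim (hΩ.mem_nhds hx) hgu hσ ENNReal.toReal_nonneg hμ

end IsUnitJacobianLimit

theorem weak_continuity_jacobian_general (hΩ : IsOpen Ω)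
    (hW11 : ∀ n, IsSobolev11On Ω (un n) (gn n)) (hgn : ∀ n, ∫ x in Ω, mnorm (gn n x) ≤ C₀)
    (hdet : ∀ n, ∀ᵐ x ∂volume.restrict Ω, (gn n x).det = 1)
    (hC : ∀ n, ∀ᵐ x ∂volume.restrict Ω, vnorm ((gn n x).mulVec e1) ≤ C)
    (hu : HasBVDerivOn Ω u gu σ gs) (hL1 : L1ConvOn Ω un u) :
    ∀ᵐ x ∂volume.restrict Ω, (gu x).det = 1 := by
  have h : IsUnitJacobianLimit Ω |C| C₀ un gn u gu σ gs :=
    { sobolev n := (hW11 n).hasScalarBVDerivOn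
      integral_mnorm_le := hgn
      det_eq_one := hdet
      bound_nonneg := abs_nonneg C
      abs_le n i := (hC n).mono fun x hx ↦ by
        rw [← mulVec_e1 (gn n x) i]
        exact ((abs_apply_le_vnorm _ i).trans hx).trans (le_abs_self C)
      bv := hu.hasScalarBVDerivOn
      mutuallySingular := hu.perp
      tendsto i := squeeze_zero (fun _ ↦ integral_nonneg fun _ ↦ abs_nonneg _)
        (fun n ↦ setIntegral_abs_sub_le_setIntegral_vnorm_sub (hW11 n).int_u hu.int_u i) hL1 }
  rw [← inter_univ Ω, ← iUnion_ball_nat (0 : V2), inter_iUnion, ae_restrict_iUnion_iff]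
  exact fun k ↦ (h.mono inter_subset_left).ae_det_eq_one_of_isBounded (hΩ.inter isOpen_ball)
    (isBounded_ball.subset inter_subset_right)

end WeakContinuity

/-- Lemma 4.2: weak continuity of Jacobian determinants.
If `(u_ε) ⊂ W^{1,1}(Ω;ℝ²)` is uniformly bounded in `W^{1,1}`, satisfies `det ∇u_ε = 1` a.e.
and `‖∂₁u_ε‖_{L^∞} ≤ C`, and `u_ε → u` in `L¹(Ω;ℝ²)` for some `u ∈ BV(Ω;ℝ²)`, then
`det ∇u = 1` a.e. in `Ω`, where `∇u` is the approximate differential of `u`. -/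
theorem weak_continuity_jacobian
    (Ω : Set V2) (hΩlip : IsLipschitzDomain Ω)
    (un : ℕ → V2 → V2) (gn : ℕ → V2 → Mat2)
    (hW11 : ∀ n, IsSobolev11On Ω (un n) (gn n))
    (C₀ : ℝ)
    (hbdW11 : ∀ n, (∫ x in Ω, vnorm (un n x)) + (∫ x in Ω, mnorm (gn n x)) ≤ C₀)
    (hdet : ∀ n, ∀ᵐ x ∂(volume.restrict Ω), (gn n x).det = 1)
    (C : ℝ)
    (hC : ∀ n, ∀ᵐ x ∂(volume.restrict Ω), vnorm ((gn n x).mulVec e1) ≤ C)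
    (u : V2 → V2) (gu : V2 → Mat2) (σ : Measure V2) (gs : V2 → Mat2)
    (hu : HasBVDerivOn Ω u gu σ gs)
    (hL1 : L1ConvOn Ω un u) :
    ∀ᵐ x ∂(volume.restrict Ω), (gu x).det = 1 :=
  weak_continuity_jacobian_general hΩlip.1 hW11
    (fun n ↦ (le_add_of_nonneg_left (integral_nonneg fun _ ↦ vnorm_nonneg _)).trans (hbdW11 n))
    hdet hC hu hL1

end
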